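/- arXiv:2106.10647 — 10 statements merged into one kernel-verified Lean document; each statement's English description precedes it below -/
import Mathlib

section
/- Let I ⊆ ℝ be a closed bounded interval and f : I → I a continuous map. Then f admits no 2-cycle if and only if every periodic point of f is a fixed point of f (i.e., for every x ∈ I and every n ≥ 1, fⁿ(x) = x implies f(x) = x). -/
/-!
Let `t` be a finite invariant set without fixed points, for instance a nontrivial periodic orbit.
Let `p` be its largest point that moves up and `q` the point of `t` that follows `p`. Then
`f q ≤ p < q ≤ f p`, so some `y` between `p` and `q` has `f y = p`, and this `y` satisfies
`f y < y ≤ f (f y)`. Since `f ∘ f` does not move the maximum of `t` up, it has a fixed point to the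
right of `y`. If that point is fixed by `f`, consider the least `r ≥ y` with `r ≤ f r`. As `f` maps
some `z` in `[y, r)` to `y`, we get `f (f z) = f y < y ≤ z`, so `f ∘ f` has a fixed point between
`y` and `z`. It lies to the left of `r` and hence is not fixed by `f`: it generates a 2-cycle.
-/

open Set Function

section LinearOrder

variable {α : Type*} [LinearOrder α] {f : α → α} {t : Set α}

theorem exists_lt_self_apply_of_finite (ht : t.Finite) (hne : t.Nonempty) (hmaps : MapsTo f t t)
    (hfix : ∀ x ∈ t, ¬IsFixedPt f x) : ∃ x ∈ t, x < f x := by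
  obtain ⟨x, hx, hmin⟩ := exists_min_image t id ht hne
  exact ⟨x, hx, (hmin (f x) (hmaps hx)).lt_of_ne' (hfix x hx)⟩

theorem exists_lt_le_apply_apply_le_of_finite (ht : t.Finite) (hne : t.Nonempty)
    (hmaps : MapsTo f t t) (hfix : ∀ x ∈ t, ¬IsFixedPt f x) :
    ∃ p ∈ t, ∃ q ∈ t, p < q ∧ q ≤ f p ∧ f q ≤ p := by
  obtain ⟨p, ⟨hp, hpf⟩, hpmax⟩ := exists_max_image {x ∈ t | x < f x} id (ht.sep _)
    (exists_lt_self_apply_of_finite ht hne hmaps hfix)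
  obtain ⟨q, ⟨hq, hpq⟩, hqmin⟩ := exists_min_image {x ∈ t | p < x} id (ht.sep _)
    ⟨f p, hmaps hp, hpf⟩
  have hqf : f q < q :=
    (not_lt.1 fun h => (hpmax q ⟨hq, h⟩).not_gt hpq).lt_of_ne (hfix q hq)
  exact ⟨p, hp, q, hq, hpq, hqmin (f p) ⟨hmaps hp, hpf⟩,
    not_lt.1 fun h => (hqmin (f q) ⟨hmaps hq, h⟩).not_gt hqf⟩

end LinearOrder

section PeriodicOrbit

variable {α : Type*} {f : α → α} {s : Set α} {x : α} {n : ℕ}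

theorem finite_range_iterate_of_isPeriodicPt (hn : 0 < n) (hx : IsPeriodicPt f n x) :
    (range fun k => f^[k] x).Finite :=
  ((finite_lt_nat n).image fun k => f^[k] x).subset <| range_subset_iff.2 fun k =>
    ⟨k % n, k.mod_lt hn, hx.iterate_mod_apply k⟩

theorem mapsTo_range_iterate (f : α → α) (x : α) :
    MapsTo f (range fun k => f^[k] x) (range fun k => f^[k] x) := by
  rintro _ ⟨k, rfl⟩
  exact ⟨k + 1, iterate_succ_apply' f k x⟩

theorem isFixedPt_iterate_iff_of_mem_periodicPts (hx : x ∈ periodicPts f) (k : ℕ) :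
    IsFixedPt f (f^[k] x) ↔ IsFixedPt f x := by
  rw [← minimalPeriod_eq_one_iff_isFixedPt, minimalPeriod_apply_iterate hx,
    minimalPeriod_eq_one_iff_isFixedPt]

theorem exists_two_cycle_iff_exists_minimalPeriod_eq_two (hmaps : MapsTo f s s) :
    (∃ x ∈ s, ∃ y ∈ s, x ≠ y ∧ f x = y ∧ f y = x) ↔ ∃ x ∈ s, minimalPeriod f x = 2 := by
  simp only [minimalPeriod_eq_prime_iff]
  constructor
  · rintro ⟨x, hx, _, -, hne, rfl, hper⟩
    exact ⟨x, hx, hper, hne.symm⟩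
  · rintro ⟨x, hx, hper, hfix⟩
    exact ⟨x, hx, f x, hmaps hx, Ne.symm hfix, rfl, hper⟩

end PeriodicOrbit

section IntervalMap

variable {α : Type*} [ConditionallyCompleteLinearOrder α] [TopologicalSpace α]
  [OrderTopology α] {f : α → α} {s t : Set α} {x y c u v : α} {n : ℕ}

theorem exists_isLeast_le_apply (hf : ContinuousOn f (Icc u v))
    (hne : ∃ x ∈ Icc u v, x ≤ f x) : ∃ r, IsLeast {x ∈ Icc u v | x ≤ f x} r :=
  (isCompact_Icc.of_isClosed_subset (isClosed_Icc.isClosed_le continuousOn_id hf)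
    (sep_subset _ _)).exists_isLeast hne

variable [DenselyOrdered α]

theorem exists_mem_Icc_isPeriodicPt_two (hf : ContinuousOn f s) (hmaps : MapsTo f s s)
    (huvs : Icc u v ⊆ s) (huv : u ≤ v) (hu : u ≤ f (f u)) (hv : f (f v) ≤ v) :
    ∃ w ∈ Icc u v, IsPeriodicPt f 2 w :=
  exists_mem_Icc_isFixedPt ((hf.comp hf hmaps).mono huvs) huv hu hv

theorem exists_minimalPeriod_eq_two_of_apply_lt (hs : s.OrdConnected) (hf : ContinuousOn f s)
    (hmaps : MapsTo f s s) (hy : y ∈ s) (hc : c ∈ s) (hyc : y ≤ c) (hlt : f y < y)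
    (hy2 : y ≤ f (f y)) (hc2 : f (f c) ≤ c) : ∃ w ∈ s, minimalPeriod f w = 2 := by
  simp only [minimalPeriod_eq_prime_iff]
  have hycs : Icc y c ⊆ s := hs.out hy hc
  obtain ⟨w, hw, hwper⟩ := exists_mem_Icc_isPeriodicPt_two hf hmaps hycs hyc hy2 hc2
  by_cases hwfix : IsFixedPt f w
  · obtain ⟨r, ⟨hr, hrf⟩, hrmin⟩ := exists_isLeast_le_apply (hf.mono hycs) ⟨w, hw, hwfix.ge⟩
    have hyrs : Icc y r ⊆ s := (Icc_subset_Icc_right hr.2).trans hycs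
    obtain ⟨z, hz, hzy⟩ : ∃ z ∈ Icc y r, f z = y :=
      intermediate_value_Icc hr.1 (hf.mono hyrs) ⟨hlt.le, hr.1.trans hrf⟩
    have hzr : z < r := by
      refine hz.2.lt_of_ne ?_
      rintro rfl
      have hzy' : z = y := (hrf.trans hzy.le).antisymm hr.1
      exact hlt.not_ge (hzy' ▸ hrf)
    have hz2 : f (f z) ≤ z := by
      rw [hzy]
      exact hlt.le.trans hz.1
    have hyzs : Icc y z ⊆ s := (Icc_subset_Icc_right hz.2).trans hyrs
    obtain ⟨v, hv, hvper⟩ := exists_mem_Icc_isPeriodicPt_two hf hmaps hyzs hz.1 hy2 hz2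
    have hvr : v < r := hv.2.trans_lt hzr
    exact ⟨v, hyzs hv, hvper, fun hvfix =>
      (hrmin ⟨⟨hv.1, hvr.le.trans hr.2⟩, hvfix.ge⟩).not_gt hvr⟩
  · exact ⟨w, hycs hw, hwper, hwfix⟩

theorem exists_minimalPeriod_eq_two_of_finite (hs : s.OrdConnected) (hf : ContinuousOn f s)
    (hmaps : MapsTo f s s) (hts : t ⊆ s) (ht : t.Finite) (hne : t.Nonempty)
    (htmaps : MapsTo f t t) (hfix : ∀ x ∈ t, ¬IsFixedPt f x) :
    ∃ w ∈ s, minimalPeriod f w = 2 := by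
  obtain ⟨p, hp, q, hq, hpq, hqp, hfq⟩ :=
    exists_lt_le_apply_apply_le_of_finite ht hne htmaps hfix
  obtain ⟨c, hc, hcmax⟩ := exists_max_image t id ht hne
  have hpqs : Icc p q ⊆ s := hs.out (hts hp) (hts hq)
  have hpf : p < f p := hpq.trans_le hqp
  obtain ⟨y, hy, hyp⟩ : ∃ y ∈ Icc p q, f y = p :=
    intermediate_value_Icc' hpq.le (hf.mono hpqs) ⟨hfq, hpf.le⟩
  have hpy : p < y := by
    refine hy.1.lt_of_ne ?_
    rintro rfl
    exact hpf.ne' hyp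
  exact exists_minimalPeriod_eq_two_of_apply_lt hs hf hmaps (hpqs hy) (hts hc)
    (hy.2.trans (hcmax q hq)) (hyp.trans_lt hpy) (hyp.symm ▸ hy.2.trans hqp)
    (hcmax _ (htmaps (htmaps hc)))

theorem exists_minimalPeriod_eq_two_of_isPeriodicPt (hs : s.OrdConnected)
    (hf : ContinuousOn f s) (hmaps : MapsTo f s s) (hx : x ∈ s) (hn : 0 < n)
    (hper : IsPeriodicPt f n x) (hfix : ¬IsFixedPt f x) : ∃ w ∈ s, minimalPeriod f w = 2 :=
  exists_minimalPeriod_eq_two_of_finite hs hf hmaps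
    (range_subset_iff.2 fun k => hmaps.iterate k hx) (finite_range_iterate_of_isPeriodicPt hn hper)
    (range_nonempty _) (mapsTo_range_iterate f x) (forall_mem_range.2 fun k =>
      (isFixedPt_iterate_iff_of_mem_periodicPts (mk_mem_periodicPts hn hper) k).not.2 hfix)

theorem stmt_0_general (hs : s.OrdConnected) (hf : ContinuousOn f s) (hmaps : MapsTo f s s) :
    (¬ ∃ x ∈ s, ∃ y ∈ s, x ≠ y ∧ f x = y ∧ f y = x) ↔
    (∀ x ∈ s, ∀ n : ℕ, 1 ≤ n → f^[n] x = x → f x = x) := by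
  rw [exists_two_cycle_iff_exists_minimalPeriod_eq_two hmaps]
  constructor
  · intro hno x hx n hn hper
    by_contra hfix
    exact hno (exists_minimalPeriod_eq_two_of_isPeriodicPt hs hf hmaps hx hn hper hfix)
  · rintro hper ⟨x, hx, hx2⟩
    obtain ⟨hxper, hxfix⟩ := minimalPeriod_eq_prime_iff.1 hx2
    exact hxfix (hper x hx 2 one_le_two hxper)

end IntervalMap

/-- An interval map with no 2-cycle is exactly one whose periodic points are all fixed. -/
theorem stmt_0 (a b : ℝ) (hab : a ≤ b) (f : ℝ → ℝ)
    (hf : ContinuousOn f (Set.Icc a b))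
    (hmaps : Set.MapsTo f (Set.Icc a b) (Set.Icc a b)) :
    (¬ ∃ x ∈ Set.Icc a b, ∃ y ∈ Set.Icc a b, x ≠ y ∧ f x = y ∧ f y = x) ↔
    (∀ x ∈ Set.Icc a b, ∀ n : ℕ, 1 ≤ n → f^[n] x = x → f x = x) :=
  stmt_0_general ordConnected_Icc hf hmaps
end

section
/- Let I ⊆ ℝ be a closed bounded interval and f : I → I a continuous map. Then f admits no 2-cycle if and only if for all x, y ∈ I, if x lies between y and f(y) (that is, min(y, f(y)) ≤ x ≤ max(y, f(y))) and y lies between x and f(x) (that is, min(x, f(x)) ≤ y ≤ max(x, f(x))), then x = y. -/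
/-!
The substantial direction produces a 2-cycle from `f y ≤ x < y ≤ f x`. The intermediate value
theorem gives `z` in `[x, y]` with `f z = y`, so that `f (f z) ≤ z < f z`. If there is `t ≤ z` with
`t ≤ f (f t)` and no fixed point in `[t, z]`, then `f ∘ f` has a fixed point there, which lies on a
2-cycle. The left endpoint of the interval serves as `t` if no fixed point lies to the left of `z`.
Otherwise let `p` be the last such fixed point: `f` takes the value `z` at some `t` in `(p, z]`,
and `f (f t) = f z > z ≥ t`.
-/

open Set

section TwoCycle

variable {α : Type*}

/-- The map `f` has a 2-cycle consisting of two distinct points of `s`. -/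
def HasTwoCycleOn (f : α → α) (s : Set α) : Prop :=
  ∃ x ∈ s, ∃ y ∈ s, x ≠ y ∧ f x = y ∧ f y = x

theorem HasTwoCycleOn.exists_ne_mem_uIcc [Lattice α] {f : α → α} {s : Set α}
    (h : HasTwoCycleOn f s) :
    ∃ x ∈ s, ∃ y ∈ s, x ≠ y ∧ x ∈ uIcc y (f y) ∧ y ∈ uIcc x (f x) := by
  obtain ⟨x, hx, y, hy, hne, hxy, hyx⟩ := h
  exact ⟨x, hx, y, hy, hne, hyx ▸ right_mem_uIcc, hxy ▸ right_mem_uIcc⟩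

variable [ConditionallyCompleteLinearOrder α] [TopologicalSpace α] [OrderTopology α]
  [DenselyOrdered α] {f : α → α} {s : Set α} {a p t x y : α}

theorem exists_map_eq_and_forall_lt_map (hf : ContinuousOn f (Icc p x)) (hpx : p ≤ x)
    (hp : f p ≤ p) (hx : x < f x) :
    ∃ t ∈ Icc p x, f t = x ∧ ∀ u ∈ Icc t x, u < f u := by
  have hcompact : IsCompact {u ∈ Icc p x | f u ≤ u} :=
    isCompact_Icc.of_isClosed_subset (isClosed_Icc.isClosed_le hf continuousOn_id) (sep_subset _ _)
  obtain ⟨q, ⟨hq, hfq⟩, hq_max⟩ := hcompact.exists_isGreatest ⟨p, left_mem_Icc.2 hpx, hp⟩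
  obtain ⟨t, ht, hft⟩ := intermediate_value_Icc hq.2 (hf.mono (Icc_subset_Icc_left hq.1))
    ⟨hfq.trans hq.2, hx.le⟩
  have hqt : q < t := by
    refine ht.1.lt_of_ne ?_
    rintro rfl
    have hqx : q = x := hq.2.antisymm (hft ▸ hfq)
    exact hx.not_ge (hqx ▸ hfq)
  refine ⟨t, ⟨hq.1.trans ht.1, ht.2⟩, hft, fun u hu => ?_⟩
  by_contra! hfu
  exact (hqt.trans_le hu.1).not_ge (hq_max ⟨⟨hq.1.trans (ht.1.trans hu.1), hu.2⟩, hfu⟩)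

theorem hasTwoCycleOn_of_forall_ne_map [s.OrdConnected] (hf : ContinuousOn f s)
    (hmaps : MapsTo f s s) (ht : t ∈ s) (hx : x ∈ s) (htx : t ≤ x) (hne : ∀ u ∈ Icc t x, u ≠ f u)
    (hfft : t ≤ f (f t)) (hffx : f (f x) ≤ x) :
    HasTwoCycleOn f s := by
  have hsub : Icc t x ⊆ s := s.Icc_subset ht hx
  obtain ⟨u, hu, hffu⟩ : ∃ u ∈ Icc t x, u = f (f u) :=
    isPreconnected_Icc.intermediate_value₂ (left_mem_Icc.2 htx) (right_mem_Icc.2 htx)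
      continuousOn_id ((hf.comp hf hmaps).mono hsub) hfft hffx
  exact ⟨u, hsub hu, f u, hmaps (hsub hu), hne u hu, rfl, hffu.symm⟩

theorem hasTwoCycleOn_of_map_map_le_of_lt_map [s.OrdConnected] (ha : IsLeast s a)
    (hf : ContinuousOn f s) (hmaps : MapsTo f s s) (hx : x ∈ s) (hffx : f (f x) ≤ x)
    (hfx : x < f x) :
    HasTwoCycleOn f s := by
  by_cases hlt : ∀ u ∈ Icc a x, u < f u
  · exact hasTwoCycleOn_of_forall_ne_map hf hmaps ha.1 hx (ha.2 hx) (fun u hu => (hlt u hu).ne)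
      (ha.2 (hmaps (hmaps ha.1))) hffx
  · push Not at hlt
    obtain ⟨p, ⟨hap, hpx⟩, hfp⟩ := hlt
    have hsub : Icc p x ⊆ s := (Icc_subset_Icc_left hap).trans (s.Icc_subset ha.1 hx)
    obtain ⟨t, ht, hft, hlt⟩ := exists_map_eq_and_forall_lt_map (hf.mono hsub) hpx hfp hfx
    have hfft : t ≤ f (f t) := by
      rw [hft]
      exact ht.2.trans hfx.le
    exact hasTwoCycleOn_of_forall_ne_map hf hmaps (hsub ht) hx ht.2 (fun u hu => (hlt u hu).ne)
      hfft hffx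

theorem hasTwoCycleOn_of_map_le_of_lt_of_le_map [s.OrdConnected] (ha : IsLeast s a)
    (hf : ContinuousOn f s) (hmaps : MapsTo f s s) (hx : x ∈ s) (hy : y ∈ s) (hfy : f y ≤ x)
    (hxy : x < y) (hfx : y ≤ f x) :
    HasTwoCycleOn f s := by
  have hsub : Icc x y ⊆ s := s.Icc_subset hx hy
  obtain ⟨z, hz, hfz⟩ := intermediate_value_Icc' hxy.le (hf.mono hsub) ⟨hfy.trans hxy.le, hfx⟩
  have hzy : z < y := by
    refine hz.2.lt_of_ne ?_
    rintro rfl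
    exact hxy.not_ge (hfz ▸ hfy)
  subst hfz
  exact hasTwoCycleOn_of_map_map_le_of_lt_map ha hf hmaps (hsub hz) (hfy.trans hz.1) hzy

theorem hasTwoCycleOn_of_lt_of_mem_uIcc [s.OrdConnected] (ha : IsLeast s a)
    (hf : ContinuousOn f s) (hmaps : MapsTo f s s) (hx : x ∈ s) (hy : y ∈ s) (hxy : x < y)
    (hxm : x ∈ uIcc y (f y)) (hym : y ∈ uIcc x (f x)) :
    HasTwoCycleOn f s :=
  hasTwoCycleOn_of_map_le_of_lt_of_le_map ha hf hmaps hx hy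
    ((min_le_iff.1 hxm.1).resolve_left hxy.not_ge) hxy
    ((le_max_iff.1 hym.2).resolve_left hxy.not_ge)

theorem stmt_1_general [s.OrdConnected] (ha : IsLeast s a) (hf : ContinuousOn f s)
    (hmaps : MapsTo f s s) :
    ¬ HasTwoCycleOn f s ↔
      ∀ x ∈ s, ∀ y ∈ s, x ∈ uIcc y (f y) → y ∈ uIcc x (f x) → x = y := by
  constructor
  · intro hno x hx y hy hxm hym
    by_contra hne
    rcases lt_or_gt_of_ne hne with hxy | hyx
    · exact hno (hasTwoCycleOn_of_lt_of_mem_uIcc ha hf hmaps hx hy hxy hxm hym)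
    · exact hno (hasTwoCycleOn_of_lt_of_mem_uIcc ha hf hmaps hy hx hyx hym hxm)
  · intro hanti hcycle
    obtain ⟨x, hx, y, hy, hne, hxm, hym⟩ := hcycle.exists_ne_mem_uIcc
    exact hne (hanti x hx y hy hxm hym)

end TwoCycle

/-- An interval map has no 2-cycle iff the "betweenness" relation is antisymmetric. -/
theorem stmt_1 (a b : ℝ) (hab : a ≤ b) (f : ℝ → ℝ)
    (hf : ContinuousOn f (Set.Icc a b))
    (hmaps : Set.MapsTo f (Set.Icc a b) (Set.Icc a b)) :
    (¬ ∃ x ∈ Set.Icc a b, ∃ y ∈ Set.Icc a b, x ≠ y ∧ f x = y ∧ f y = x) ↔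
    (∀ x ∈ Set.Icc a b, ∀ y ∈ Set.Icc a b,
      (min y (f y) ≤ x ∧ x ≤ max y (f y)) →
      (min x (f x) ≤ y ∧ y ≤ max x (f x)) → x = y) :=
  stmt_1_general (isLeast_Icc hab) hf hmaps
end

section
/- Let I ⊆ ℝ be a closed bounded interval and f : I → I a continuous map admitting no 2-cycle. Then for every x ∈ I the orbit (fⁿ(x))_{n≥0} converges to some point p ∈ I with f(p) = p. -/
/-!
Suppose `f` has no 2-cycle. If `x ≤ f x`, the orbit of `x` never comes back below `x`. Hence every
point of an orbit at which `f` moves up lies below the liminf of the orbit, and every point at which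
`f` moves down lies above its limsup. If the liminf were smaller than the limsup, the orbit would
jump infinitely often from below the liminf to above the limsup and back, so by continuity `f` would
exchange the two. They would form a 2-cycle, so they agree and the orbit converges.
-/

open Filter Function Set Topology

/-- Membership in the first Sharkovsky class `𝓕₁`: the map `f` has no 2-cycle, in the positive form
that every fixed point of the second iterate is already a fixed point of `f`. -/
def NoTwoCycle {α : Type*} (f : α → α) : Prop :=
  ∀ x, f (f x) = x → f x = x

section FixedPoints

variable {α : Type*} [ConditionallyCompleteLinearOrder α] [DenselyOrdered α] [TopologicalSpace α]
  [OrderTopology α]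

lemma exists_isFixedPt_forall_Ioc_lt {g : α → α} {u v : α} (hg : ContinuousOn g (Icc u v))
    (huv : u ≤ v) (hu : u ≤ g u) (hv : g v ≤ v) :
    ∃ c ∈ Icc u v, IsFixedPt g c ∧ ∀ y ∈ Ioc c v, g y < y := by
  have hcompact : IsCompact {y ∈ Icc u v | y ≤ g y} :=
    isCompact_Icc.of_isClosed_subset (isClosed_Icc.isClosed_le continuousOn_id hg) (sep_subset _ _)
  obtain ⟨c, ⟨⟨huc, hcv⟩, hc⟩, hgreatest⟩ :=
    hcompact.exists_isGreatest ⟨u, left_mem_Icc.2 huv, hu⟩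
  obtain ⟨z, ⟨hcz, hzv⟩, hz⟩ :=
    exists_mem_Icc_isFixedPt (hg.mono (Icc_subset_Icc_left huc)) hcv hc hv
  have hzc : z = c := le_antisymm (hgreatest ⟨⟨huc.trans hcz, hzv⟩, hz.ge⟩) hcz
  refine ⟨c, ⟨huc, hcv⟩, hzc ▸ hz, fun y ⟨hcy, hyv⟩ ↦ ?_⟩
  by_contra! hy
  exact hcy.not_ge (hgreatest ⟨⟨huc.trans hcy.le, hyv⟩, hy⟩)

lemma lt_apply_of_forall_Icc_not_isFixedPt {g : α → α} {y v : α} (hg : ContinuousOn g (Icc y v))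
    (hyv : y ≤ v) (hfix : ∀ t ∈ Icc y v, ¬ IsFixedPt g t) (hv : v < g v) : y < g y := by
  by_contra! hy
  obtain ⟨t, ht, hgt⟩ : ∃ t ∈ Icc y v, g t = id t :=
    isPreconnected_Icc.intermediate_value₂ (left_mem_Icc.2 hyv) (right_mem_Icc.2 hyv)
      hg continuousOn_id hy hv.le
  exact hfix t ht hgt

end FixedPoints

namespace NoTwoCycle

section OrderBot

variable {α : Type*} [ConditionallyCompleteLinearOrderBot α] [DenselyOrdered α] [TopologicalSpace α]
  [OrderTopology α] {f : α → α} {x : α}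

/- Otherwise let `c` be the greatest fixed point of `f ∘ f` below `x`. Just to the right of `c` the
map `f` moves points up while `f ∘ f` moves them down, but two steps up cannot make a step down. -/
lemma lt_apply_apply (h : NoTwoCycle f) (hf : Continuous f) (hx : x < f x) : x < f (f x) := by
  by_contra! hffx
  obtain ⟨c, ⟨-, hcx⟩, hffc, hdown⟩ :=
    exists_isFixedPt_forall_Ioc_lt (hf.comp hf).continuousOn bot_le bot_le hffx
  have hfc : f c = c := h c hffc
  have hcx : c < x := hcx.lt_of_ne fun hcx ↦ hx.ne' (hcx ▸ hfc)
  have hup : ∀ y ∈ Ioc c x, y < f y := fun y ⟨hcy, hyx⟩ ↦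
    lt_apply_of_forall_Icc_not_isFixedPt hf.continuousOn hyx
      (fun t ⟨hyt, htx⟩ ht ↦ (hdown t ⟨hcy.trans_le hyt, htx⟩).ne (ht.comp ht)) hx
  have hnear : ∀ᶠ y in 𝓝[>] c, f y < x :=
    hf.continuousWithinAt.tendsto.eventually_lt_const (by rwa [hfc])
  have : (𝓝[>] c).NeBot := nhdsGT_neBot_of_exists_gt ⟨x, hcx⟩
  obtain ⟨y, hfyx, hcy, hyx⟩ := (hnear.and (Ioo_mem_nhdsGT hcx)).exists
  have hyfy : y < f y := hup y ⟨hcy, hyx.le⟩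
  have hfyffy : f y < f (f y) := hup (f y) ⟨hcy.trans hyfy, hfyx.le⟩
  exact (hyfy.trans hfyffy).not_gt (hdown y ⟨hcy, hyx.le⟩)

/- Let `c` be the last fixed point before `w`. To the right of `c` the map `f` moves points down,
and a point of `[x, c]` sent to or above `w` would produce some `z` with `f z = w`, which goes up
and then, at the second step, back down. -/
lemma apply_lt_of_mem_Ico (h : NoTwoCycle f) (hf : Continuous f) {w y : α} (hx : x ≤ f x)
    (hw : f w ≤ x) (hy : y ∈ Ico x w) : f y < w := by
  have hxw : x < w := hy.1.trans_lt hy.2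
  obtain ⟨c, ⟨-, hcw⟩, hfc, hdown⟩ :=
    exists_isFixedPt_forall_Ioc_lt hf.continuousOn hxw.le hx (hw.trans hxw.le)
  have hcw : c < w := hcw.lt_of_ne fun hcw ↦ (hw.trans_lt hxw).ne (hcw ▸ hfc)
  rcases lt_or_ge c y with hcy | hyc
  · exact (hdown y ⟨hcy, hy.2.le⟩).trans hy.2
  by_contra! hwy
  obtain ⟨z, ⟨hyz, hzc⟩, hfz⟩ :=
    intermediate_value_Icc' hyc hf.continuousOn ⟨hfc.le.trans hcw.le, hwy⟩
  have hzffz : z < f (f z) := h.lt_apply_apply hf (hfz ▸ hzc.trans_lt hcw)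
  rw [hfz] at hzffz
  exact (hw.trans (hy.1.trans hyz)).not_gt hzffz

/- At a first return below `x`, from a point `w` say, the orbit would have stayed in `[x, w)`
before reaching `w`. -/
lemma le_iterate (h : NoTwoCycle f) (hf : Continuous f) (hx : x ≤ f x) (n : ℕ) : x ≤ f^[n] x := by
  induction n using Nat.strong_induction_on with | _ n ih
  cases n with
  | zero => exact le_rfl
  | succ n =>
    by_contra! hreturn
    rw [iterate_succ_apply'] at hreturn
    generalize hw : f^[n] x = w at hreturn
    have hxw : x < w := by
      refine (hw ▸ ih n n.lt_succ_self).lt_of_ne ?_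
      rintro rfl
      exact hreturn.not_ge hx
    have hstay : ∀ j ≤ n, f^[j] x < w := by
      intro j
      induction j with
      | zero => exact fun _ ↦ hxw
      | succ j ihj =>
        intro hj
        rw [iterate_succ_apply']
        exact h.apply_lt_of_mem_Ico hf hx hreturn.le ⟨ih j (by lia), ihj (by lia)⟩
    exact (hstay n le_rfl).ne hw

end OrderBot

end NoTwoCycle

section Oscillation

lemma frequently_and_succ {P Q : ℕ → Prop} (hP : ∃ᶠ n in atTop, P n) (hQ : ∃ᶠ n in atTop, Q n)
    (hPQ : ∀ n, P n ∨ Q n) : ∃ᶠ n in atTop, P n ∧ Q (n + 1) := by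
  intro hno
  obtain ⟨N, hN⟩ := eventually_atTop.1 hno
  obtain ⟨m, hNm, hm⟩ := frequently_atTop.1 hP N
  have hPm : ∀ n ≥ m, P n := by
    intro n hmn
    induction n, hmn using Nat.le_induction with
    | base => exact hm
    | succ n hmn ih => exact (hPQ (n + 1)).resolve_right fun hQn ↦ hN n (hNm.trans hmn) ⟨ih, hQn⟩
  obtain ⟨n, hmn, hQn⟩ := frequently_atTop.1 hQ (m + 1)
  obtain ⟨k, rfl⟩ := Nat.exists_eq_add_of_le' (Nat.one_le_of_lt hmn)
  exact hN k (by lia) ⟨hPm k (by lia), hQn⟩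

variable {α : Type*} [CompleteLinearOrder α] [TopologicalSpace α] [OrderTopology α]

lemma tendsto_liminf_of_eventually_le {ι κ : Type*} {l : Filter ι} {l' : Filter κ} {u : ι → α}
    {φ : κ → ι} (hφ : Tendsto φ l' l) (hle : ∀ᶠ k in l', u (φ k) ≤ liminf u l) :
    Tendsto (u ∘ φ) l' (𝓝 (liminf u l)) :=
  tendsto_order.2 ⟨fun _ he ↦ hφ.eventually (eventually_lt_of_lt_liminf he),
    fun _ he ↦ hle.mono fun _ hk ↦ hk.trans_lt he⟩

lemma tendsto_limsup_of_eventually_ge {ι κ : Type*} {l : Filter ι} {l' : Filter κ} {u : ι → α}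
    {φ : κ → ι} (hφ : Tendsto φ l' l) (hge : ∀ᶠ k in l', limsup u l ≤ u (φ k)) :
    Tendsto (u ∘ φ) l' (𝓝 (limsup u l)) :=
  tendsto_liminf_of_eventually_le (α := αᵒᵈ) hφ hge

lemma map_liminf_eq_limsup {f : α → α} {s : ℕ → α} (hf : ContinuousAt f (liminf s atTop))
    (hs : ∀ n, s (n + 1) = f (s n)) (hsplit : ∀ n, s n ≤ liminf s atTop ∨ limsup s atTop ≤ s n)
    (hlt : liminf s atTop < limsup s atTop) : f (liminf s atTop) = limsup s atTop := by
  have hlow : ∃ᶠ n in atTop, s n ≤ liminf s atTop :=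
    (frequently_lt_of_liminf_lt (h := hlt)).mono fun n hn ↦ (hsplit n).resolve_right hn.not_ge
  have hhigh : ∃ᶠ n in atTop, limsup s atTop ≤ s n :=
    (frequently_lt_of_lt_limsup (h := hlt)).mono fun n hn ↦ (hsplit n).resolve_left hn.not_ge
  set jumps := {n | s n ≤ liminf s atTop ∧ limsup s atTop ≤ s (n + 1)}
  have : NeBot (atTop ⊓ 𝓟 jumps) :=
    frequently_mem_iff_neBot.1 (frequently_and_succ hlow hhigh hsplit)
  have hjumps : ∀ᶠ n in atTop ⊓ 𝓟 jumps, n ∈ jumps := mem_inf_of_right (mem_principal_self jumps)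
  have hsource : Tendsto s (atTop ⊓ 𝓟 jumps) (𝓝 (liminf s atTop)) :=
    tendsto_liminf_of_eventually_le (φ := id) inf_le_left (hjumps.mono fun _ hn ↦ hn.1)
  have htarget : Tendsto (fun n ↦ s (n + 1)) (atTop ⊓ 𝓟 jumps) (𝓝 (limsup s atTop)) :=
    tendsto_limsup_of_eventually_ge ((tendsto_add_atTop_nat 1).mono_left inf_le_left)
      (hjumps.mono fun _ hn ↦ hn.2)
  simp only [hs] at htarget
  exact tendsto_nhds_unique (hf.tendsto.comp hsource) htarget

lemma map_limsup_eq_liminf {f : α → α} {s : ℕ → α} (hf : ContinuousAt f (limsup s atTop))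
    (hs : ∀ n, s (n + 1) = f (s n)) (hsplit : ∀ n, s n ≤ liminf s atTop ∨ limsup s atTop ≤ s n)
    (hlt : liminf s atTop < limsup s atTop) : f (limsup s atTop) = liminf s atTop :=
  map_liminf_eq_limsup (α := αᵒᵈ) hf hs (fun n ↦ (hsplit n).symm) hlt

end Oscillation

namespace NoTwoCycle

section Convergence

variable {α : Type*} [CompleteLinearOrder α] [DenselyOrdered α] [TopologicalSpace α]
  [OrderTopology α] {f : α → α}

lemma iterate_le_liminf (h : NoTwoCycle f) (hf : Continuous f) (x : α) {n : ℕ}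
    (hn : f^[n] x ≤ f (f^[n] x)) : f^[n] x ≤ liminf (fun k ↦ f^[k] x) atTop := by
  rw [← liminf_nat_add _ n]
  refine le_liminf_of_le (h := .of_forall fun k ↦ ?_)
  rw [iterate_add_apply]
  exact h.le_iterate hf hn k

lemma limsup_le_iterate (h : NoTwoCycle f) (hf : Continuous f) (x : α) {n : ℕ}
    (hn : f (f^[n] x) ≤ f^[n] x) : limsup (fun k ↦ f^[k] x) atTop ≤ f^[n] x :=
  iterate_le_liminf (α := αᵒᵈ) h hf x hn

lemma liminf_iterate_eq_limsup_iterate (h : NoTwoCycle f) (hf : Continuous f) (x : α) :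
    liminf (fun n ↦ f^[n] x) atTop = limsup (fun n ↦ f^[n] x) atTop := by
  have hs (n : ℕ) : f^[n + 1] x = f (f^[n] x) := iterate_succ_apply' f n x
  have hsplit (n : ℕ) : f^[n] x ≤ liminf (fun k ↦ f^[k] x) atTop ∨
      limsup (fun k ↦ f^[k] x) atTop ≤ f^[n] x :=
    (le_total (f^[n] x) (f (f^[n] x))).imp (h.iterate_le_liminf hf x) (h.limsup_le_iterate hf x)
  by_contra hne
  have hlt := (liminf_le_limsup (f := atTop)).lt_of_ne hne
  have hup := map_liminf_eq_limsup hf.continuousAt hs hsplit hlt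
  have hdown := map_limsup_eq_liminf hf.continuousAt hs hsplit hlt
  have hfix := h (liminf (fun n ↦ f^[n] x) atTop) (by rw [hup, hdown])
  exact hne (hfix.symm.trans hup)

theorem exists_isFixedPt_tendsto_iterate (h : NoTwoCycle f) (hf : Continuous f) (x : α) :
    ∃ p, IsFixedPt f p ∧ Tendsto (fun n ↦ f^[n] x) atTop (𝓝 p) := by
  have hlim : Tendsto (fun n ↦ f^[n] x) atTop (𝓝 (limsup (fun n ↦ f^[n] x) atTop)) :=
    tendsto_of_liminf_eq_limsup (h.liminf_iterate_eq_limsup_iterate hf x) rfl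
  exact ⟨_, isFixedPt_of_tendsto_iterate hlim hf.continuousAt, hlim⟩

end Convergence

end NoTwoCycle

theorem stmt_2_general {α : Type*} [ConditionallyCompleteLinearOrder α] [DenselyOrdered α]
    [TopologicalSpace α] [OrderTopology α] {a b : α} {f : α → α} (hf : ContinuousOn f (Icc a b))
    (hmaps : MapsTo f (Icc a b) (Icc a b))
    (hno2 : ¬ ∃ x ∈ Icc a b, ∃ y ∈ Icc a b, x ≠ y ∧ f x = y ∧ f y = x) :
    ∀ x ∈ Icc a b, ∃ p ∈ Icc a b, f p = p ∧ Tendsto (fun n ↦ f^[n] x) atTop (𝓝 p) := by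
  intro x hx
  have : Fact (a ≤ b) := ⟨hx.1.trans hx.2⟩
  have hnoTwoCycle : NoTwoCycle (hmaps.restrict f (Icc a b) (Icc a b)) := by
    intro y hy
    by_contra hne
    exact hno2 ⟨y, y.2, f y, hmaps y.2, fun hyf ↦ hne (Subtype.ext hyf.symm), rfl,
      congrArg Subtype.val hy⟩
  obtain ⟨p, hp, hlim⟩ :=
    hnoTwoCycle.exists_isFixedPt_tendsto_iterate (hf.mapsToRestrict hmaps) ⟨x, hx⟩
  refine ⟨p, p.2, congrArg Subtype.val hp, ?_⟩
  simpa only [MapsTo.coe_iterate_restrict] using tendsto_subtype_rng.1 hlim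

/-- For an interval map with no 2-cycle, every orbit converges to a fixed point. -/
theorem stmt_2 (a b : ℝ) (hab : a ≤ b) (f : ℝ → ℝ)
    (hf : ContinuousOn f (Set.Icc a b))
    (hmaps : Set.MapsTo f (Set.Icc a b) (Set.Icc a b))
    (hno2 : ¬ ∃ x ∈ Set.Icc a b, ∃ y ∈ Set.Icc a b, x ≠ y ∧ f x = y ∧ f y = x) :
    ∀ x ∈ Set.Icc a b, ∃ p ∈ Set.Icc a b, f p = p ∧
      Filter.Tendsto (fun n => f^[n] x) Filter.atTop (nhds p) :=
  stmt_2_general hf hmaps hno2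
end

section
/- Let I ⊆ ℝ be a closed bounded interval and f : I → I a continuous map admitting no 2-cycle, and let x ∈ I. Then every term of the orbit (fⁿ(x))_{n≥0} is a wall; that is, for all m and all n > m: if f^{m+1}(x) > f^{m}(x) then fⁿ(x) > f^{m}(x); if f^{m+1}(x) < f^{m}(x) then fⁿ(x) < f^{m}(x); and if f^{m+1}(x) = f^{m}(x) then fⁿ(x) = f^{m}(x). -/
/-!
The induction needs only that `f` has no weak 2-cycle, i.e. no points `u < v` with `v ≤ f u` and
`f v ≤ u`, a condition that is invariant under reversing the order. Let `x < f x` and let `n` be the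
first time with `f^[n] x ≤ x`. No term `f^[i] x` with `0 < i < n` moves up, as by induction the
orbit would then stay above it, and so above `x`. Hence the orbit descends from `f x` down to
`v = f^[n - 1] x`, and `x < v ≤ f x` with `f v ≤ x` is a weak 2-cycle.

If `u < v` is a weak 2-cycle of a continuous `f`, then some `w ∈ [u, v)` has `f w = v`, so
`f (f w) ≤ w < f w`. For a self-map of an interval with a least element this forces a 2-cycle: the
greatest `t ≤ w` with `t ≤ f (f t)` satisfies `f (f t) = t`, and if `f t = t` then the interval
`(t, w)` contains a preimage `y` of `w`, for which `y < w < f (f y)`.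
-/

open Set

variable {α : Type*}

/-- The term `u m` is a wall of the sequence `u`: all later terms compare with `u m` in the same way
as `u (m + 1)` does. -/
def IsWall [LT α] (u : ℕ → α) (m : ℕ) : Prop :=
  ∀ n, m < n →
    (u (m + 1) > u m → u n > u m) ∧
    (u (m + 1) < u m → u n < u m) ∧
    (u (m + 1) = u m → u n = u m)

/-- No two distinct points of `s` are exchanged by `f`. -/
def NoTwoCycleOn (f : α → α) (s : Set α) : Prop :=
  ¬ ∃ x ∈ s, ∃ y ∈ s, x ≠ y ∧ f x = y ∧ f y = x

/-- No points `u < v` of `s` are exchanged by `f` in the weak sense that `v ≤ f u` and `f v ≤ u`. -/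
def NoWeakTwoCycleOn [Preorder α] (f : α → α) (s : Set α) : Prop :=
  ∀ u ∈ s, ∀ v ∈ s, u < v → ¬ (v ≤ f u ∧ f v ≤ u)

theorem NoTwoCycleOn.apply_eq_self {f : α → α} {s : Set α} (hcycle : NoTwoCycleOn f s)
    (hmaps : MapsTo f s s) {t : α} (ht : t ∈ s) (hfft : f (f t) = t) : f t = t := by
  by_contra hne
  exact hcycle ⟨t, ht, f t, hmaps ht, Ne.symm hne, rfl, hfft⟩

section LinearOrder

variable [LinearOrder α] {f : α → α} {s : Set α} {x : α}

theorem NoWeakTwoCycleOn.dual (hweak : NoWeakTwoCycleOn f s) :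
    NoWeakTwoCycleOn (α := αᵒᵈ) f s :=
  fun u hu v hv huv h => hweak v hv u hu huv h.symm

theorem NoWeakTwoCycleOn.lt_iterate (hweak : NoWeakTwoCycleOn f s) (hmaps : MapsTo f s s)
    (hx : x ∈ s) (hxf : x < f x) {n : ℕ} (hn : 0 < n) : x < f^[n] x := by
  induction n using Nat.strong_induction_on generalizing x with
  | _ n ih =>
    by_contra! hreturn
    have hmem (i : ℕ) : f^[i] x ∈ s := hmaps.iterate i hx
    have hdown (i : ℕ) (hi : 0 < i) (hin : i < n) : f^[i + 1] x ≤ f^[i] x := by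
      by_contra! hup
      rw [Function.iterate_succ_apply'] at hup
      have habove : f^[i] x < f^[n - i] (f^[i] x) := ih (n - i) (by lia) (hmem i) hup (by lia)
      rw [← Function.iterate_add_apply, Nat.sub_add_cancel hin.le] at habove
      exact ((ih i hin hx hxf hi).trans habove).not_ge hreturn
    have hle_first (i : ℕ) (hi : 1 ≤ i) : i < n → f^[i] x ≤ f x := by
      induction i, hi using Nat.le_induction with
      | base => exact fun _ => le_rfl
      | succ i hi hle => exact fun hin => (hdown i hi (by lia)).trans (hle (by lia))
    obtain ⟨k, rfl⟩ := Nat.exists_eq_add_one.mpr hn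
    obtain rfl | hk := Nat.eq_zero_or_pos k
    · exact hxf.not_ge hreturn
    · rw [Function.iterate_succ_apply'] at hreturn
      exact hweak x hx _ (hmem k) (ih k k.lt_succ_self hx hxf hk)
        ⟨hle_first k hk k.lt_succ_self, hreturn⟩

theorem NoWeakTwoCycleOn.iterate_lt (hweak : NoWeakTwoCycleOn f s) (hmaps : MapsTo f s s)
    (hx : x ∈ s) (hxf : f x < x) {n : ℕ} (hn : 0 < n) : f^[n] x < x :=
  NoWeakTwoCycleOn.lt_iterate (α := αᵒᵈ) hweak.dual hmaps hx hxf hn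

theorem NoWeakTwoCycleOn.isWall_iterate (hweak : NoWeakTwoCycleOn f s) (hmaps : MapsTo f s s)
    (hx : x ∈ s) (m : ℕ) : IsWall (fun k => f^[k] x) m := by
  intro n hmn
  obtain ⟨k, hk, rfl⟩ : ∃ k, 0 < k ∧ n = k + m := ⟨n - m, by lia, by lia⟩
  have hm : f^[m] x ∈ s := hmaps.iterate m hx
  simp only [Function.iterate_succ_apply', Function.iterate_add_apply]
  exact ⟨fun hup => hweak.lt_iterate hmaps hm hup hk,
    fun hdown => hweak.iterate_lt hmaps hm hdown hk,
    fun hfix => Function.iterate_fixed hfix k⟩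

end LinearOrder

section OrderTopology

variable [ConditionallyCompleteLinearOrder α] [DenselyOrdered α] [TopologicalSpace α]
  [OrderTopology α] {f : α → α} {s : Set α} {a x : α}

theorem exists_isGreatest_le_and_eq_of_continuousOn_Icc {g : α → α} (hax : a ≤ x)
    (hg : ContinuousOn g (Icc a x)) (ha : a ≤ g a) (hx : g x ≤ x) :
    ∃ t, IsGreatest {t ∈ Icc a x | t ≤ g t} t ∧ g t = t := by
  have hclosed : IsClosed {t ∈ Icc a x | t ≤ g t} := isClosed_Icc.isClosed_le continuousOn_id hg
  obtain ⟨t, ht, hmax⟩ :=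
    (isCompact_Icc.of_isClosed_subset hclosed (sep_subset _ _)).exists_isGreatest
      ⟨a, left_mem_Icc.mpr hax, ha⟩
  obtain ⟨c, hc, hgc⟩ := isPreconnected_Icc.intermediate_value₂ (left_mem_Icc.mpr ht.1.2)
    (right_mem_Icc.mpr ht.1.2) continuousOn_id (hg.mono (Icc_subset_Icc_left ht.1.1)) ht.2 hx
  have hct : c = t := (hmax ⟨⟨ht.1.1.trans hc.1, hc.2⟩, hgc.le⟩).antisymm hc.1
  exact ⟨t, ⟨ht, hmax⟩, hct ▸ hgc.symm⟩

theorem NoTwoCycleOn.lt_apply_apply [s.OrdConnected] (hcycle : NoTwoCycleOn f s)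
    (ha : IsLeast s a) (hf : ContinuousOn f s) (hmaps : MapsTo f s s) (hx : x ∈ s)
    (hxf : x < f x) : x < f (f x) := by
  by_contra! hreturn
  have hsub : Icc a x ⊆ s := s.Icc_subset ha.1 hx
  obtain ⟨t, ⟨⟨htx, -⟩, hmax⟩, hfft⟩ :=
    exists_isGreatest_le_and_eq_of_continuousOn_Icc (g := fun t => f (f t)) (ha.2 hx)
      ((hf.comp hf hmaps).mono hsub) (ha.2 (hmaps (hmaps ha.1))) hreturn
  have hft : f t = t := hcycle.apply_eq_self hmaps (hsub htx) hfft
  obtain ⟨y, hy, hfy⟩ : x ∈ f '' Icc t x :=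
    intermediate_value_Icc htx.2 (hf.mono ((Icc_subset_Icc_left htx.1).trans hsub))
      ⟨hft.trans_le htx.2, hxf.le⟩
  have hyt : y = t :=
    (hmax ⟨⟨htx.1.trans hy.1, hy.2⟩, by simpa only [hfy] using hy.2.trans hxf.le⟩).antisymm hy.1
  have hxt : x = t := by rw [← hfy, hyt, hft]
  exact hxf.ne' (hxt ▸ hft)

theorem NoTwoCycleOn.noWeakTwoCycleOn [s.OrdConnected] (hcycle : NoTwoCycleOn f s)
    (ha : IsLeast s a) (hf : ContinuousOn f s) (hmaps : MapsTo f s s) :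
    NoWeakTwoCycleOn f s := by
  rintro u hu v hv huv ⟨hvfu, hfvu⟩
  have hsub : Icc u v ⊆ s := s.Icc_subset hu hv
  obtain ⟨w, hw, hfw⟩ : v ∈ f '' Icc u v :=
    intermediate_value_Icc' huv.le (hf.mono hsub) ⟨hfvu.trans huv.le, hvfu⟩
  have hfv : f v < v := hfvu.trans_lt huv
  have hwv : w < v := hw.2.lt_of_ne (by rintro rfl; exact hfv.ne hfw)
  have hwfv : w < f v := hfw ▸ hcycle.lt_apply_apply ha hf hmaps (hsub hw) (hfw.symm ▸ hwv)
  exact (hwfv.trans_le hfvu).not_ge hw.1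

theorem stmt_3_general [s.OrdConnected] (ha : IsLeast s a) (hf : ContinuousOn f s)
    (hmaps : MapsTo f s s) (hcycle : NoTwoCycleOn f s) (hx : x ∈ s) (m : ℕ) :
    IsWall (fun k => f^[k] x) m :=
  (hcycle.noWeakTwoCycleOn ha hf hmaps).isWall_iterate hmaps hx m

end OrderTopology

/-- For an interval map with no 2-cycle, every term of every orbit is a wall. -/
theorem stmt_3 (a b : ℝ) (hab : a ≤ b) (f : ℝ → ℝ)
    (hf : ContinuousOn f (Set.Icc a b))
    (hmaps : Set.MapsTo f (Set.Icc a b) (Set.Icc a b))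
    (hno2 : ¬ ∃ x ∈ Set.Icc a b, ∃ y ∈ Set.Icc a b, x ≠ y ∧ f x = y ∧ f y = x)
    (x : ℝ) (hx : x ∈ Set.Icc a b) :
    ∀ m n : ℕ, m < n →
      (f^[m+1] x > f^[m] x → f^[n] x > f^[m] x) ∧
      (f^[m+1] x < f^[m] x → f^[n] x < f^[m] x) ∧
      (f^[m+1] x = f^[m] x → f^[n] x = f^[m] x) :=
  stmt_3_general (isLeast_Icc hab) hf hmaps hno2 hx
end

section
/- Let I ⊆ ℝ be a closed bounded interval, f : I → I a continuous map admitting no 2-cycle, x ∈ I, and suppose the orbit x_n = fⁿ(x) converges to p. Then for every index i with x_i ≠ p: x_{i+1} < x_i if and only if x_i > p, and x_{i+1} > x_i if and only if x_i < p. -/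
/-!
The heart of the proof is a statement about two steps: if `f x ≤ x`, then `f (f x) ≤ x`. Otherwise
let `c > x` be the first fixed point of `f ∘ f` to the right of `x`. Without 2-cycles `c` is fixed
by `f`, so `f` takes the value `x` at some `t ∈ [x, c]`, where `f (f t) = f x ≤ t`. Minimality of
`c` forces `t = c`, whence `x = f c = c`, a contradiction.

Consequently `f` maps all of `[f x, x]` into `(-∞, x]`: if `q` in this interval moves up, then
`q = f r` for some `r ∈ [q, x]`, so `f q = f (f r) ≤ r ≤ x`. By induction on the number of steps,
the whole orbit of `x` stays below `x` if `f x ≤ x`, and dually above `x` if `x ≤ f x`, and so does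
its limit.
-/

open Set Filter Function Topology OrderDual

/-- `f` is a continuous self-map of `[a, b]` without a 2-cycle; the latter is expressed by saying
that every point fixed by `f ∘ f` is already fixed by `f`. -/
structure IsTwoCycleFreeMap {α : Type*} [Preorder α] [TopologicalSpace α] (f : α → α) (a b : α) :
    Prop where
  continuousOn : ContinuousOn f (Icc a b)
  mapsTo : MapsTo f (Icc a b) (Icc a b)
  isFixedPt : ∀ x ∈ Icc a b, f (f x) = x → IsFixedPt f x

theorem IsTwoCycleFreeMap.dual {α : Type*} [Preorder α] [TopologicalSpace α] {f : α → α} {a b : α}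
    (h : IsTwoCycleFreeMap f a b) :
    IsTwoCycleFreeMap (toDual ∘ f ∘ ofDual) (toDual b) (toDual a) where
  continuousOn := by rw [Icc_toDual]; exact h.continuousOn
  mapsTo := by rw [Icc_toDual]; exact h.mapsTo
  isFixedPt x hx := h.isFixedPt (ofDual x) hx.symm

section LinearContinuum

variable {α : Type*} [ConditionallyCompleteLinearOrder α] [DenselyOrdered α] [TopologicalSpace α]
  [OrderTopology α] {f : α → α} {a b x : α}

theorem exists_isFixedPt_forall_Ico_lt (hf : ContinuousOn f (Icc a b)) (hab : a ≤ b)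
    (ha : a ≤ f a) (hb : f b ≤ b) : ∃ c ∈ Icc a b, IsFixedPt f c ∧ ∀ t ∈ Ico a c, t < f t := by
  have hcompact : IsCompact {t ∈ Icc a b | f t ≤ t} :=
    isCompact_Icc.of_isClosed_subset (isClosed_Icc.isClosed_le hf continuousOn_id)
      (sep_subset _ _)
  obtain ⟨c, ⟨hc, hfc⟩, hleast⟩ := hcompact.exists_isLeast ⟨b, right_mem_Icc.2 hab, hb⟩
  obtain ⟨t, ht, hft⟩ := exists_mem_Icc_isFixedPt
    (hf.mono (Icc_subset_Icc_right hc.2)) hc.1 ha hfc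
  have htc : t = c := ht.2.antisymm (hleast ⟨⟨ht.1, ht.2.trans hc.2⟩, hft.le⟩)
  refine ⟨c, hc, htc ▸ hft, fun t ht => ?_⟩
  by_contra! hft
  exact ht.2.not_ge (hleast ⟨⟨ht.1, ht.2.le.trans hc.2⟩, hft⟩)

namespace IsTwoCycleFreeMap

theorem map_map_le_self (h : IsTwoCycleFreeMap f a b) (hx : x ∈ Icc a b) (hfx : f x ≤ x) :
    f (f x) ≤ x := by
  by_contra! hlt
  have hsub : Icc x b ⊆ Icc a b := Icc_subset_Icc_left hx.1
  have hb : b ∈ Icc a b := ⟨hx.1.trans hx.2, le_rfl⟩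
  obtain ⟨c, hc, hffc, hfirst⟩ := exists_isFixedPt_forall_Ico_lt
    ((h.continuousOn.comp h.continuousOn h.mapsTo).mono hsub) hx.2 hlt.le
    (h.mapsTo (h.mapsTo hb)).2
  have hfc : f c = c := h.isFixedPt c (hsub hc) hffc
  obtain ⟨t, ht, hft⟩ : x ∈ f '' Icc x c :=
    intermediate_value_Icc hc.1 (h.continuousOn.mono ((Icc_subset_Icc_right hc.2).trans hsub))
      ⟨hfx, hfc.symm ▸ hc.1⟩
  have htc : t = c := by
    by_contra hne
    have : t < f (f t) := hfirst t ⟨ht.1, ht.2.lt_of_ne hne⟩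
    rw [hft] at this
    exact (hfx.trans ht.1).not_gt this
  have hxc : x = c := by rw [← hft, htc, hfc]
  exact hlt.ne' (hxc ▸ hffc)

theorem mapsTo_Icc_Iic (h : IsTwoCycleFreeMap f a b) (hx : x ∈ Icc a b) :
    MapsTo f (Icc (f x) x) (Iic x) := by
  rintro q ⟨hxq, hqx⟩
  obtain hq | hq := le_total (f q) q
  · exact hq.trans hqx
  have hsub : Icc q x ⊆ Icc a b := Icc_subset_Icc ((h.mapsTo hx).1.trans hxq) hx.2
  obtain ⟨r, hr, rfl⟩ : q ∈ f '' Icc q x :=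
    intermediate_value_Icc' hqx (h.continuousOn.mono hsub) ⟨hxq, hq⟩
  exact (h.map_map_le_self (hsub hr) hr.1).trans hr.2

theorem mapsTo_Icc_Ici (h : IsTwoCycleFreeMap f a b) (hx : x ∈ Icc a b) :
    MapsTo f (Icc x (f x)) (Ici x) :=
  fun _ hq => h.dual.mapsTo_Icc_Iic (x := toDual x) hx.symm hq.symm

theorem iterate_le_self_and_self_le_iterate (h : IsTwoCycleFreeMap f a b) (n : ℕ)
    (hx : x ∈ Icc a b) : (f x ≤ x → f^[n] x ≤ x) ∧ (x ≤ f x → x ≤ f^[n] x) := by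
  induction n using Nat.twoStepInduction generalizing x with
  | zero => simp
  | one => simp
  | more n ih ih' =>
    have hn := ih (h.mapsTo hx)
    have hn' := ih' (h.mapsTo hx)
    constructor <;> intro hfx
    · obtain hffx | hffx := le_total (f (f x)) (f x)
      · exact (hn'.1 hffx).trans hfx
      · rw [iterate_succ_apply']
        exact h.mapsTo_Icc_Iic hx ⟨hn.2 hffx, (ih' hx).1 hfx⟩
    · obtain hffx | hffx := le_total (f (f x)) (f x)
      · rw [iterate_succ_apply']
        exact h.mapsTo_Icc_Ici hx ⟨(ih' hx).2 hfx, hn.1 hffx⟩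
      · exact hfx.trans (hn'.2 hffx)

end IsTwoCycleFreeMap

theorem stmt_4_general {p : α} (hf : ContinuousOn f (Icc a b))
    (hmaps : MapsTo f (Icc a b) (Icc a b))
    (hno2 : ¬ ∃ x ∈ Icc a b, ∃ y ∈ Icc a b, x ≠ y ∧ f x = y ∧ f y = x)
    (hx : x ∈ Icc a b) (htend : Tendsto (fun n => f^[n] x) atTop (𝓝 p)) (i : ℕ)
    (hi : f^[i] x ≠ p) :
    (f^[i+1] x < f^[i] x ↔ p < f^[i] x) ∧ (f^[i+1] x > f^[i] x ↔ f^[i] x < p) := by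
  have h : IsTwoCycleFreeMap f a b := ⟨hf, hmaps, fun y hy hffy => by
    by_contra hne
    exact hno2 ⟨y, hy, f y, hmaps hy, Ne.symm hne, rfl, hffy⟩⟩
  have horbit (n : ℕ) := h.iterate_le_self_and_self_le_iterate n (hmaps.iterate i hx)
  have hlim : Tendsto (fun n => f^[n] (f^[i] x)) atTop (𝓝 p) := by
    simpa only [iterate_add_apply] using (tendsto_add_atTop_iff_nat i).2 htend
  rw [iterate_succ_apply']
  have hle (hdown : f (f^[i] x) ≤ f^[i] x) : p ≤ f^[i] x :=
    le_of_tendsto' hlim fun n => (horbit n).1 hdown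
  have hge (hup : f^[i] x ≤ f (f^[i] x)) : f^[i] x ≤ p :=
    ge_of_tendsto' hlim fun n => (horbit n).2 hup
  constructor
  · exact ⟨fun hdown => (hle hdown.le).lt_of_ne' hi, fun hp => lt_of_not_ge (hp.not_ge <| hge ·)⟩
  · exact ⟨fun hup => (hge hup.le).lt_of_ne hi, fun hp => lt_of_not_ge (hp.not_ge <| hle ·)⟩

end LinearContinuum

/-- For an orbit of a map with no 2-cycle converging to p, each term moves left
iff it is above p and moves right iff it is below p. -/
theorem stmt_4 (a b : ℝ) (hab : a ≤ b) (f : ℝ → ℝ)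
    (hf : ContinuousOn f (Set.Icc a b))
    (hmaps : Set.MapsTo f (Set.Icc a b) (Set.Icc a b))
    (hno2 : ¬ ∃ x ∈ Set.Icc a b, ∃ y ∈ Set.Icc a b, x ≠ y ∧ f x = y ∧ f y = x)
    (x : ℝ) (hx : x ∈ Set.Icc a b) (p : ℝ)
    (htend : Filter.Tendsto (fun n => f^[n] x) Filter.atTop (nhds p)) :
    ∀ i : ℕ, f^[i] x ≠ p →
      (f^[i+1] x < f^[i] x ↔ p < f^[i] x) ∧
      (f^[i+1] x > f^[i] x ↔ f^[i] x < p) :=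
  stmt_4_general hf hmaps hno2 hx htend
end

section
/- Let I, J ⊆ ℝ be closed bounded intervals, f : I → I and g : J → J continuous maps each admitting no 2-cycle, and let x ∈ I, y ∈ J. Set a_n = fⁿ(x) and b_n = gⁿ(y). If for every n one has (a_{n+1} < a_n ⟺ b_{n+1} < b_n) and (a_{n+1} = a_n ⟺ b_{n+1} = b_n), then (a_n) and (b_n) have the same order pattern: for all m, n, a_m < a_n if and only if b_m < b_n. -/
/-!
The core is that `x < f x` forces `x < fⁿ x` for all `n ≥ 1`. For `n = 2`: if `f (f x) ≤ x`, let
`p` be the last point of `[a, x]` with `f p ≤ p`. Some `t ∈ (p, x]` has `f t = x`, hence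
`f (f t) > t`, so `f ∘ f` has a fixed point in `[t, x]`; as there is no 2-cycle, it is fixed by `f`,
contradicting the choice of `p`. By the intermediate value theorem, it follows that `r < s ≤ f r`
implies `r < f s`, and this alone propagates along the orbit. With the order dual, the comparison of
`fⁿ z` with `z` is therefore that of `f z` with `z`.
-/

open Function OrderDual Set

/-- `f` has no 2-cycle in `s`: it does not swap two distinct points of `s`. It is written in negated
existential form so as to unfold to the usual wording. -/
def HasNoTwoCycleOn {α : Type*} (f : α → α) (s : Set α) : Prop :=
  ¬ ∃ x ∈ s, ∃ y ∈ s, x ≠ y ∧ f x = y ∧ f y = x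

section LinearOrder

variable {α β : Type*} [LinearOrder α] [LinearOrder β]

theorem cmp_eq_cmp_of_lt_iff_of_eq_iff {a b : α} {c d : β} (hlt : a < b ↔ c < d)
    (heq : a = b ↔ c = d) : cmp a b = cmp c d := by
  rcases lt_trichotomy a b with h | h | h
  · rw [(cmp_eq_lt_iff a b).2 h, (cmp_eq_lt_iff c d).2 (hlt.1 h)]
  · rw [(cmp_eq_eq_iff a b).2 h, (cmp_eq_eq_iff c d).2 (heq.1 h)]
  · have hdc : d < c := lt_of_le_of_ne (not_lt.1 fun hcd => h.not_gt (hlt.2 hcd))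
      fun hdc => h.ne' (heq.2 hdc.symm)
    rw [(cmp_eq_gt_iff a b).2 h, (cmp_eq_gt_iff c d).2 hdc]

theorem apply_zero_lt_apply_succ_of_forall_lt_succ {u : ℕ → α} (h₀ : u 0 < u 1)
    (h : ∀ i j, u i < u j → u j ≤ u (i + 1) → u i < u (j + 1)) (n : ℕ) : u 0 < u (n + 1) := by
  induction n using Nat.strong_induction_on with
  | _ n ih =>
    rcases n with _ | n
    · exact h₀
    -- The sequence starts below the level `u (n + 1)` and climbs to it in some step, at `i ≤ n`.
    obtain ⟨i, hbelow, hreach⟩ : ∃ i, ¬(n < i ∨ u (n + 1) ≤ u i) ∧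
        (n < i + 1 ∨ u (n + 1) ≤ u (i + 1)) :=
      Nat.exists_not_and_succ_of_not_zero_of_exists (p := fun i => n < i ∨ u (n + 1) ≤ u i)
        (by simpa using ih n n.lt_succ_self) ⟨n + 1, Or.inr le_rfl⟩
    obtain ⟨hin, hlt⟩ := not_or.1 hbelow
    have hle : u (n + 1) ≤ u (i + 1) := hreach.elim
      (fun hni => by rw [show i = n by omega]) id
    have hi : u 0 ≤ u i := by
      rcases i with _ | i
      · exact le_rfl
      · exact (ih i (by omega)).le
    exact hi.trans_lt (h i (n + 1) (not_le.1 hlt) hle)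

end LinearOrder

namespace HasNoTwoCycleOn

theorem isFixedPt {α : Type*} {f : α → α} {s : Set α} (h : HasNoTwoCycleOn f s)
    (hm : MapsTo f s s) {x : α} (hx : x ∈ s) (hfx : f (f x) = x) : IsFixedPt f x :=
  by_contra fun hne => h ⟨x, hx, f x, hm hx, Ne.symm hne, rfl, hfx⟩

variable {α : Type*} [ConditionallyCompleteLinearOrder α] [TopologicalSpace α] [OrderTopology α]
  [DenselyOrdered α] {f : α → α}

theorem exists_mem_Icc_isFixedPt_of_map_map {s : Set α} (h : HasNoTwoCycleOn f s)
    (hf : ContinuousOn f s) (hm : MapsTo f s s) {u v : α} (hs : Icc u v ⊆ s) (huv : u ≤ v)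
    (hu : u ≤ f (f u)) (hv : f (f v) ≤ v) : ∃ q ∈ Icc u v, IsFixedPt f q := by
  obtain ⟨q, hq, hqfix⟩ :=
    exists_mem_Icc_isFixedPt ((hf.comp hf hm).mono hs) huv hu hv
  exact ⟨q, hq, h.isFixedPt hm (hs hq) hqfix⟩

variable {a b : α}

theorem lt_map_map (h : HasNoTwoCycleOn f (Icc a b)) (hf : ContinuousOn f (Icc a b))
    (hm : MapsTo f (Icc a b) (Icc a b)) {x : α} (hx : x ∈ Icc a b) (hlt : x < f x) :
    x < f (f x) := by
  by_contra! hle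
  have hsub : Icc a x ⊆ Icc a b := Icc_subset_Icc_right hx.2
  have ha : a ∈ Icc a b := ⟨le_rfl, hx.1.trans hx.2⟩
  have hclosed : IsClosed {t ∈ Icc a x | f t ≤ t} :=
    isClosed_Icc.isClosed_le (hf.mono hsub) continuousOn_id
  have hnonempty : {t ∈ Icc a x | f t ≤ t}.Nonempty := by
    obtain ⟨q, hq, hqfix⟩ :=
      h.exists_mem_Icc_isFixedPt_of_map_map hf hm hsub hx.1 (hm (hm ha)).1 hle
    exact ⟨q, hq, hqfix.le⟩
  obtain ⟨p, ⟨hp, hfp⟩, hmax⟩ :=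
    (isCompact_Icc.of_isClosed_subset hclosed (sep_subset _ _)).exists_isGreatest hnonempty
  have hpx : p < x := hp.2.lt_of_ne <| by
    rintro rfl
    exact hfp.not_gt hlt
  obtain ⟨t, ht, hft⟩ : x ∈ f '' Icc p x :=
    intermediate_value_Icc hp.2 (hf.mono ((Icc_subset_Icc_left hp.1).trans hsub))
      ⟨hfp.trans hp.2, hlt.le⟩
  have hpt : p < t := ht.1.lt_of_ne <| by
    rintro rfl
    exact hfp.not_gt (hft ▸ hpx)
  have htff : t ≤ f (f t) := hft.symm ▸ ht.2.trans hlt.le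
  have hat : a ≤ t := hp.1.trans ht.1
  obtain ⟨q, hq, hqfix⟩ := h.exists_mem_Icc_isFixedPt_of_map_map hf hm
    ((Icc_subset_Icc_left hat).trans hsub) ht.2 htff hle
  exact (hpt.trans_le hq.1).not_ge (hmax ⟨⟨hat.trans hq.1, hq.2⟩, hqfix.le⟩)

theorem lt_map_of_le_map (h : HasNoTwoCycleOn f (Icc a b)) (hf : ContinuousOn f (Icc a b))
    (hm : MapsTo f (Icc a b) (Icc a b)) {r s : α} (hr : r ∈ Icc a b) (hs : s ∈ Icc a b)
    (hrs : r < s) (hsr : s ≤ f r) : r < f s := by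
  by_contra! hle
  have hsub : Icc r s ⊆ Icc a b := Icc_subset_Icc hr.1 hs.2
  obtain ⟨t, ht, hft⟩ : s ∈ f '' Icc r s :=
    intermediate_value_Icc' hrs.le (hf.mono hsub) ⟨hle.trans hrs.le, hsr⟩
  have hts : t < s := ht.2.lt_of_ne <| by
    rintro rfl
    exact (hft ▸ hle).not_gt hrs
  have htfs : t < f s := hft ▸ h.lt_map_map hf hm (hsub ht) (hft.symm ▸ hts)
  exact (ht.1.trans_lt htfs).not_ge hle

theorem lt_iterate_succ (h : HasNoTwoCycleOn f (Icc a b)) (hf : ContinuousOn f (Icc a b))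
    (hm : MapsTo f (Icc a b) (Icc a b)) {x : α} (hx : x ∈ Icc a b) (hlt : x < f x) (n : ℕ) :
    x < f^[n + 1] x := by
  refine apply_zero_lt_apply_succ_of_forall_lt_succ (u := fun k => f^[k] x) hlt
    (fun i j hij hji => ?_) n
  simp only [iterate_succ_apply'] at hji ⊢
  exact h.lt_map_of_le_map hf hm (hm.iterate i hx) (hm.iterate j hx) hij hji

theorem iterate_succ_lt (h : HasNoTwoCycleOn f (Icc a b)) (hf : ContinuousOn f (Icc a b))
    (hm : MapsTo f (Icc a b) (Icc a b)) {x : α} (hx : x ∈ Icc a b) (hlt : f x < x) (n : ℕ) :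
    f^[n + 1] x < x := by
  have hIcc : (Icc (toDual b) (toDual a) : Set αᵒᵈ) = Icc a b := Icc_toDual
  exact lt_iterate_succ (α := αᵒᵈ) (f := f) (a := toDual b) (b := toDual a)
    (hIcc ▸ h) (hIcc ▸ hf) (hIcc ▸ hm) (hIcc ▸ hx) hlt n

theorem cmp_iterate_succ (h : HasNoTwoCycleOn f (Icc a b)) (hf : ContinuousOn f (Icc a b))
    (hm : MapsTo f (Icc a b) (Icc a b)) {x : α} (hx : x ∈ Icc a b) (n : ℕ) :
    cmp (f^[n + 1] x) x = cmp (f x) x := by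
  rcases lt_trichotomy (f x) x with hlt | hfix | hgt
  · rw [(cmp_eq_lt_iff _ _).2 hlt, (cmp_eq_lt_iff _ _).2 (h.iterate_succ_lt hf hm hx hlt n)]
  · rw [iterate_fixed hfix, hfix]
  · rw [(cmp_eq_gt_iff _ _).2 hgt, (cmp_eq_gt_iff _ _).2 (h.lt_iterate_succ hf hm hx hgt n)]

theorem cmp_iterate_of_lt (h : HasNoTwoCycleOn f (Icc a b)) (hf : ContinuousOn f (Icc a b))
    (hm : MapsTo f (Icc a b) (Icc a b)) {x : α} (hx : x ∈ Icc a b) {m n : ℕ} (hmn : m < n) :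
    cmp (f^[n] x) (f^[m] x) = cmp (f^[m + 1] x) (f^[m] x) := by
  obtain ⟨k, rfl⟩ := Nat.exists_eq_add_of_lt hmn
  rw [show m + k + 1 = k + 1 + m by omega, iterate_add_apply, iterate_succ_apply' f m]
  exact h.cmp_iterate_succ hf hm (hm.iterate m hx) k

end HasNoTwoCycleOn

theorem stmt_8_general {α β : Type*}
    [ConditionallyCompleteLinearOrder α] [TopologicalSpace α] [OrderTopology α] [DenselyOrdered α]
    [ConditionallyCompleteLinearOrder β] [TopologicalSpace β] [OrderTopology β] [DenselyOrdered β]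
    {a b : α} {c d : β} {f : α → α} {g : β → β}
    (hf : ContinuousOn f (Icc a b)) (hfmaps : MapsTo f (Icc a b) (Icc a b))
    (hfno2 : HasNoTwoCycleOn f (Icc a b))
    (hg : ContinuousOn g (Icc c d)) (hgmaps : MapsTo g (Icc c d) (Icc c d))
    (hgno2 : HasNoTwoCycleOn g (Icc c d))
    {x : α} {y : β} (hx : x ∈ Icc a b) (hy : y ∈ Icc c d)
    (hstep : ∀ n : ℕ,
      (f^[n + 1] x < f^[n] x ↔ g^[n + 1] y < g^[n] y) ∧
      (f^[n + 1] x = f^[n] x ↔ g^[n + 1] y = g^[n] y)) (m n : ℕ) :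
    f^[m] x < f^[n] x ↔ g^[m] y < g^[n] y := by
  have hcmp {i j : ℕ} (hij : i < j) :
      cmp (f^[j] x) (f^[i] x) = cmp (g^[j] y) (g^[i] y) := by
    rw [hfno2.cmp_iterate_of_lt hf hfmaps hx hij, hgno2.cmp_iterate_of_lt hg hgmaps hy hij]
    exact cmp_eq_cmp_of_lt_iff_of_eq_iff (hstep i).1 (hstep i).2
  rcases lt_trichotomy m n with hmn | rfl | hnm
  · exact lt_iff_lt_of_cmp_eq_cmp (cmp_eq_cmp_symm.1 (hcmp hmn))
  · exact iff_of_false (lt_irrefl _) (lt_irrefl _)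
  · exact lt_iff_lt_of_cmp_eq_cmp (hcmp hnm)

/-- For orbits of maps with no 2-cycle, agreement of the step-by-step comparisons
forces agreement of the whole order pattern. -/
theorem stmt_8 (a b c d : ℝ) (hab : a ≤ b) (hcd : c ≤ d)
    (f g : ℝ → ℝ)
    (hf : ContinuousOn f (Set.Icc a b))
    (hfmaps : Set.MapsTo f (Set.Icc a b) (Set.Icc a b))
    (hfno2 : ¬ ∃ x ∈ Set.Icc a b, ∃ y ∈ Set.Icc a b, x ≠ y ∧ f x = y ∧ f y = x)
    (hg : ContinuousOn g (Set.Icc c d))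
    (hgmaps : Set.MapsTo g (Set.Icc c d) (Set.Icc c d))
    (hgno2 : ¬ ∃ x ∈ Set.Icc c d, ∃ y ∈ Set.Icc c d, x ≠ y ∧ g x = y ∧ g y = x)
    (x y : ℝ) (hx : x ∈ Set.Icc a b) (hy : y ∈ Set.Icc c d)
    (hstep : ∀ n : ℕ,
      (f^[n+1] x < f^[n] x ↔ g^[n+1] y < g^[n] y) ∧
      (f^[n+1] x = f^[n] x ↔ g^[n+1] y = g^[n] y)) :
    ∀ m n : ℕ, f^[m] x < f^[n] x ↔ g^[m] y < g^[n] y :=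
  stmt_8_general hf hfmaps hfno2 hg hgmaps hgno2 hx hy hstep
end

section
/- For every sequence s : ℕ → {L, R} there exist a continuous map f : [−1, 1] → [−1, 1] admitting no 2-cycle and a point x ∈ [−1, 1] such that for every n: if s(n) = L then f^{n+1}(x) < fⁿ(x), and if s(n) = R then f^{n+1}(x) > fⁿ(x). -/
inductive LR : Type
  | L : LR
  | R : LR

/-!
Choose the orbit first: let its `n`-th term be `2⁻ⁿ` when the tag is `L` and `-2⁻ⁿ` when it is `R`.
Its distance to `0` halves at each step, so the next move goes towards the side of `0`, as the tag
prescribes. The distance between two terms is at least half the absolute value of the larger one,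
so the shift along the sequence is Lipschitz and extends to a continuous map of the line. Clipping
the extension to `|f y| ≤ |y| / 2` changes nothing on the orbit and leaves `0` as the only periodic
point.
-/

section GeometricDecay

variable {q : ℝ}

section Seminormed

variable {E : Type*} [SeminormedAddCommGroup E] {x : ℕ → E}

lemma norm_antitone_of_norm_succ_le (hq : q ≤ 1) (hx : ∀ n, ‖x (n + 1)‖ ≤ q * ‖x n‖) :
    Antitone fun n ↦ ‖x n‖ :=
  antitone_nat_of_succ_le fun n ↦ (hx n).trans (mul_le_of_le_one_left (norm_nonneg _) hq)

lemma norm_le_mul_norm_of_lt (hq : q ≤ 1) (hx : ∀ n, ‖x (n + 1)‖ ≤ q * ‖x n‖) {m n : ℕ}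
    (hmn : m < n) : ‖x n‖ ≤ q * ‖x m‖ :=
  (norm_antitone_of_norm_succ_le hq hx hmn).trans (hx m)

lemma dist_succ_succ_le (hq : q < 1) (hx : ∀ n, ‖x (n + 1)‖ ≤ q * ‖x n‖) (m n : ℕ) :
    dist (x (m + 1)) (x (n + 1)) ≤ 2 / (1 - q) * dist (x m) (x n) := by
  wlog hmn : m < n generalizing m n
  · obtain rfl | hnm := (not_lt.mp hmn).eq_or_lt
    · simp
    · simpa only [dist_comm] using this n m hnm
  have antitone_norm := norm_antitone_of_norm_succ_le hq.le hx
  have separated : (1 - q) * ‖x m‖ ≤ dist (x m) (x n) := by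
    rw [dist_eq_norm]
    linarith [norm_sub_norm_le (x m) (x n), norm_le_mul_norm_of_lt hq.le hx hmn]
  calc dist (x (m + 1)) (x (n + 1))
      ≤ ‖x (m + 1)‖ + ‖x (n + 1)‖ := dist_le_norm_add_norm _ _
    _ ≤ ‖x m‖ + ‖x m‖ := add_le_add (antitone_norm (by lia)) (antitone_norm (by lia))
    _ = 2 / (1 - q) * ((1 - q) * ‖x m‖) := by field [(sub_pos.mpr hq).ne']
    _ ≤ 2 / (1 - q) * dist (x m) (x n) :=
      mul_le_mul_of_nonneg_left separated (div_nonneg zero_le_two (sub_pos.mpr hq).le)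

end Seminormed

lemma eq_zero_of_isPeriodicPt_of_norm_le {E : Type*} [NormedAddCommGroup E] {f : E → E}
    (hq : q < 1) (hf : ∀ y, ‖f y‖ ≤ q * ‖y‖) {n : ℕ} (hn : 0 < n) {y : E}
    (hy : Function.IsPeriodicPt f n y) : y = 0 := by
  have decay : ‖f^[n] y‖ ≤ q * ‖y‖ :=
    norm_le_mul_norm_of_lt (x := fun k ↦ f^[k] y) hq.le
      (fun k ↦ by simpa only [Function.iterate_succ_apply'] using hf (f^[k] y)) hn
  rw [hy.eq] at decay
  by_contra hy₀
  exact (mul_lt_of_lt_one_left (norm_pos_iff.mpr hy₀) hq).not_ge decay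

end GeometricDecay

lemma exists_lipschitzWith_apply_eq {ι α : Type*} [PseudoMetricSpace α] {x : ι → α} {y : ι → ℝ}
    {K : ℝ} (h : ∀ i j, dist (y i) (y j) ≤ K * dist (x i) (x j)) :
    ∃ f : α → ℝ, LipschitzWith K.toNNReal f ∧ ∀ i, f (x i) = y i := by
  have factors : y.FactorsThrough x := fun i j hij ↦ by
    simpa only [hij, dist_self, mul_zero, dist_le_zero] using h i j
  have lipschitzOn : LipschitzOnWith K.toNNReal (Function.extend x y 0) (Set.range x) := by
    refine LipschitzOnWith.of_dist_le' ?_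
    rintro _ ⟨i, rfl⟩ _ ⟨j, rfl⟩
    simpa only [factors.extend_apply] using h i j
  obtain ⟨f, hf, hfx⟩ := lipschitzOn.extend_real
  exact ⟨f, hf, fun i ↦ by rw [← hfx ⟨i, rfl⟩, factors.extend_apply]⟩

lemma iterate_apply_zero_eq {α : Type*} {f : α → α} {x : ℕ → α} (h : ∀ n, f (x n) = x (n + 1))
    (n : ℕ) : f^[n] (x 0) = x n := by
  induction n with
  | zero => rfl
  | succ n ih => rw [Function.iterate_succ_apply', ih, h]

lemma exists_continuous_iterate_eq {x : ℕ → ℝ} {q : ℝ} (hq₀ : 0 ≤ q) (hq : q < 1)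
    (hx : ∀ n, |x (n + 1)| ≤ q * |x n|) :
    ∃ f : ℝ → ℝ, Continuous f ∧ (∀ y, |f y| ≤ q * |y|) ∧ ∀ n, f^[n] (x 0) = x n := by
  obtain ⟨g, hg, hgx⟩ := exists_lipschitzWith_apply_eq (dist_succ_succ_le hq hx)
  refine ⟨fun y ↦ max (-(q * |y|)) (min (q * |y|) (g y)), ?_, fun y ↦ ?_,
    iterate_apply_zero_eq fun n ↦ ?_⟩
  · have := hg.continuous
    fun_prop
  · have : 0 ≤ q * |y| := by positivity
    exact abs_le.mpr ⟨le_max_left _ _, max_le (by linarith) (min_le_left _ _)⟩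
  · obtain ⟨lower, upper⟩ := abs_le.mp (hx n)
    rw [hgx, min_eq_right upper, max_eq_right lower]

/-- The orbit to be realized for the tag `s`: the `n`-th term has absolute value `2⁻ⁿ`, and it is
positive when `s n = L` and negative when `s n = R`. -/
noncomputable def taggedOrbit (s : ℕ → LR) (n : ℕ) : ℝ :=
  match s n with
  | LR.L => (1 / 2) ^ n
  | LR.R => -(1 / 2) ^ n

section TaggedOrbit

variable {s : ℕ → LR} {n : ℕ}

lemma taggedOrbit_of_eq_L (h : s n = LR.L) : taggedOrbit s n = (1 / 2) ^ n := by
  simp only [taggedOrbit, h]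

lemma taggedOrbit_of_eq_R (h : s n = LR.R) : taggedOrbit s n = -(1 / 2) ^ n := by
  simp only [taggedOrbit, h]

lemma abs_taggedOrbit (s : ℕ → LR) (n : ℕ) : |taggedOrbit s n| = (1 / 2) ^ n := by
  have : |((1 : ℝ) / 2) ^ n| = (1 / 2) ^ n := abs_of_nonneg (by positivity)
  cases h : s n
  · rwa [taggedOrbit_of_eq_L h]
  · rwa [taggedOrbit_of_eq_R h, abs_neg]

lemma abs_taggedOrbit_succ_lt (s : ℕ → LR) (n : ℕ) : |taggedOrbit s (n + 1)| < (1 / 2) ^ n := by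
  rw [abs_taggedOrbit]
  exact pow_lt_pow_right_of_lt_one₀ (by norm_num) (by norm_num) n.lt_succ_self

lemma taggedOrbit_succ_lt (h : s n = LR.L) : taggedOrbit s (n + 1) < taggedOrbit s n := by
  rw [taggedOrbit_of_eq_L h]
  exact (abs_lt.mp (abs_taggedOrbit_succ_lt s n)).2

lemma lt_taggedOrbit_succ (h : s n = LR.R) : taggedOrbit s n < taggedOrbit s (n + 1) := by
  rw [taggedOrbit_of_eq_R h]
  exact (abs_lt.mp (abs_taggedOrbit_succ_lt s n)).1

end TaggedOrbit

/-- Every L-R sequence is realized as the tag of an orbit of some interval map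
on [-1,1] with no 2-cycle. -/
theorem stmt_9 (s : ℕ → LR) :
    ∃ f : ℝ → ℝ,
      ContinuousOn f (Set.Icc (-1 : ℝ) 1) ∧
      Set.MapsTo f (Set.Icc (-1 : ℝ) 1) (Set.Icc (-1 : ℝ) 1) ∧
      (¬ ∃ x ∈ Set.Icc (-1 : ℝ) 1, ∃ y ∈ Set.Icc (-1 : ℝ) 1,
        x ≠ y ∧ f x = y ∧ f y = x) ∧
      ∃ x ∈ Set.Icc (-1 : ℝ) 1, ∀ n : ℕ,
        (s n = LR.L → f^[n+1] x < f^[n] x) ∧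
        (s n = LR.R → f^[n+1] x > f^[n] x) := by
  obtain ⟨f, continuous_f, abs_f_le, iterate_f⟩ :=
    exists_continuous_iterate_eq (x := taggedOrbit s) (q := 1 / 2) (by norm_num) (by norm_num)
      fun n ↦ by simp only [abs_taggedOrbit, pow_succ', le_refl]
  have eq_zero_of_two_cycle {x y : ℝ} (hxy : f x = y) (hyx : f y = x) : x = 0 :=
    eq_zero_of_isPeriodicPt_of_norm_le one_half_lt_one abs_f_le two_pos
      (show f (f x) = x by rw [hxy, hyx])
  refine ⟨f, continuous_f.continuousOn, fun x hx ↦ abs_le.mp ?_, ?_, taggedOrbit s 0,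
    abs_le.mp (by rw [abs_taggedOrbit, pow_zero]), fun n ↦ ?_⟩
  · linarith [abs_f_le x, abs_le.mpr hx, abs_nonneg x]
  · rintro ⟨x, -, y, -, hne, hxy, hyx⟩
    exact hne ((eq_zero_of_two_cycle hxy hyx).trans (eq_zero_of_two_cycle hyx hxy).symm)
  · rw [iterate_f, iterate_f]
    exact ⟨taggedOrbit_succ_lt, lt_taggedOrbit_succ⟩
end

section
/- Let 0 < r < 1 and define f : [−1, 1] → ℝ by f(x) = r·x·sin(1/x) for x ≠ 0 and f(0) = 0. Then f is continuous, maps [−1, 1] into itself, admits no 2-cycle (i.e., there is no x ∈ [−1, 1] with f(f(x)) = x and f(x) ≠ x), and 0 is the unique fixed point of f. -/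
/-!
Since `|sin| ≤ 1`, we have `|f x| ≤ |r| |x|`. This gives continuity at `0` and, as `|r| < 1`, makes
`|·|` a strict Lyapunov function: it decreases along every orbit until the orbit reaches `0`. An
orbit that returns to its starting point can therefore only be that of `0`.
-/

open Function Set

theorem eq_of_isPeriodicPt_of_forall_ne_lt {α β : Type*} [Preorder β] {f : α → α} {p : α}
    {V : α → β} (hp : IsFixedPt f p) (hV : ∀ x, x ≠ p → V (f x) < V x) {n : ℕ} (hn : 0 < n)
    {x : α} (hx : IsPeriodicPt f n x) : x = p := by
  by_contra hxp
  have V_map_le (y : α) : V (f y) ≤ V y := by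
    rcases eq_or_ne y p with rfl | hy
    · exact (congrArg V hp).le
    · exact (hV y hy).le
  have V_iterate_le (k : ℕ) : V (f^[k] (f x)) ≤ V (f x) :=
    Iterate.rec (V · ≤ V (f x)) le_rfl (fun y hy ↦ (V_map_le y).trans hy) k
  have return_to_x : f^[n - 1] (f x) = x := by
    rw [← iterate_succ_apply, Nat.succ_eq_add_one, Nat.sub_add_cancel hn, hx.eq]
  exact lt_irrefl (V x) <| calc
    V x = V (f^[n - 1] (f x)) := by rw [return_to_x]
    _ ≤ V (f x) := V_iterate_le (n - 1)
    _ < V x := hV x hxp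

theorem continuous_smul_comp_inv {𝕜 E : Type*} [NormedField 𝕜] [SeminormedAddCommGroup E]
    [NormedSpace 𝕜 E] {g : 𝕜 → E} (hg : Continuous g) {C : ℝ} (hC : ∀ y, ‖g y‖ ≤ C) :
    Continuous fun x : 𝕜 ↦ x • g x⁻¹ := by
  refine continuous_iff_continuousAt.2 fun x ↦ ?_
  rcases eq_or_ne x 0 with rfl | hx
  · refine continuousAt_of_locally_lipschitz one_pos C fun y _ ↦ ?_
    rw [zero_smul, dist_zero_right, dist_zero_right, norm_smul, mul_comm]
    exact mul_le_mul_of_nonneg_right (hC y⁻¹) (norm_nonneg y)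
  · exact continuousAt_id.smul (hg.continuousAt.comp (continuousAt_inv₀ hx))

theorem continuous_mul_mul_sin_one_div (r : ℝ) :
    Continuous fun x : ℝ ↦ r * x * Real.sin (1 / x) := by
  simpa only [smul_eq_mul, one_div, mul_assoc] using
    (continuous_smul_comp_inv Real.continuous_sin Real.abs_sin_le_one).const_mul r

theorem abs_mul_mul_sin_le (r x θ : ℝ) : |r * x * Real.sin θ| ≤ |r| * |x| := by
  rw [abs_mul, abs_mul]
  exact mul_le_of_le_one_right (by positivity) (Real.abs_sin_le_one θ)

theorem stmt_10_general {r : ℝ} (hr : |r| < 1) {f : ℝ → ℝ} (hf0 : f 0 = 0)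
    (hfx : ∀ x : ℝ, x ≠ 0 → f x = r * x * Real.sin (1 / x)) :
    Continuous f ∧ (∀ a : ℝ, MapsTo f (Icc (-a) a) (Icc (-a) a)) ∧
      ∀ n > 0, ∀ x, IsPeriodicPt f n x → x = 0 := by
  have f_eq : f = fun x ↦ r * x * Real.sin (1 / x) := by
    funext x
    rcases eq_or_ne x 0 with rfl | hx
    · rw [hf0, mul_zero, zero_mul]
    · exact hfx x hx
  have abs_f_le (x : ℝ) : |f x| ≤ |r| * |x| := f_eq ▸ abs_mul_mul_sin_le r x (1 / x)
  refine ⟨f_eq ▸ continuous_mul_mul_sin_one_div r, fun a x hx ↦ ?_, fun n hn x hx ↦ ?_⟩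
  · exact abs_le.1 <| (abs_f_le x).trans <|
      (mul_le_of_le_one_left (abs_nonneg x) hr.le).trans (abs_le.2 hx)
  · exact eq_of_isPeriodicPt_of_forall_ne_lt hf0
      (fun y hy ↦ (abs_f_le y).trans_lt (mul_lt_of_lt_one_left (abs_pos.2 hy) hr)) hn hx

/-- For 0 < r < 1, the map x ↦ r x sin(1/x) (with value 0 at 0) is a continuous
self-map of [-1,1] with no 2-cycle whose unique fixed point is 0. -/
theorem stmt_10 (r : ℝ) (hr0 : 0 < r) (hr1 : r < 1) (f : ℝ → ℝ)
    (hf0 : f 0 = 0) (hfx : ∀ x : ℝ, x ≠ 0 → f x = r * x * Real.sin (1 / x)) :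
    ContinuousOn f (Set.Icc (-1 : ℝ) 1) ∧
    Set.MapsTo f (Set.Icc (-1 : ℝ) 1) (Set.Icc (-1 : ℝ) 1) ∧
    (¬ ∃ x ∈ Set.Icc (-1 : ℝ) 1, f (f x) = x ∧ f x ≠ x) ∧
    (∀ x ∈ Set.Icc (-1 : ℝ) 1, f x = x → x = 0) := by
  obtain ⟨hcont, hmaps, hper⟩ := stmt_10_general ((abs_of_pos hr0).trans_lt hr1) hf0 hfx
  exact ⟨hcont.continuousOn, hmaps 1, fun ⟨x, _, hffx, hne⟩ ↦ hne (hper 2 two_pos x hffx ▸ hf0),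
    fun x _ hx ↦ hper 1 one_pos x hx⟩
end

section
/- Let 0 < r < 1 and define f : [−1, 1] → [−1, 1] by f(x) = r·x·sin(1/x) for x ≠ 0 and f(0) = 0. For every sequence s : ℕ → {L, R} there exists x ∈ [−1, 1] such that for every n ≥ 0: if s(n) = L then fⁿ(x) > 0, and if s(n) = R then fⁿ(x) < 0. -/
/-!
Arbitrarily close to `0` and on either side of it, the graph of `f` meets both lines `y = r * x`
and `y = -r * x`, so there is a compact interval there whose image is a neighborhood of `0`.
One can therefore choose intervals `I 0, I 1, …` on the prescribed sides with
`I (n + 1) ⊆ f '' I n`, and by compactness some orbit visits all of them in order.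
-/

open Set Filter Topology

section Itinerary

variable {X : Type*} {f : X → X}

theorem exists_forall_le_iterate_mem {I : ℕ → Set X} (hne : ∀ n, (I n).Nonempty)
    (hI : ∀ n, I (n + 1) ⊆ f '' I n) (n : ℕ) : ∃ x, ∀ k ≤ n, f^[k] x ∈ I k := by
  induction n generalizing I with
  | zero =>
    obtain ⟨x, hx⟩ := hne 0
    exact ⟨x, fun k hk => by rwa [Nat.le_zero.1 hk]⟩
  | succ n ih =>
    obtain ⟨y, hy⟩ := ih (fun k => hne (k + 1)) (fun k => hI (k + 1))
    obtain ⟨x, hx, rfl⟩ := hI 0 (hy 0 n.zero_le)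
    refine ⟨x, fun k hk => ?_⟩
    cases k with
    | zero => exact hx
    | succ k => exact hy k (Nat.succ_le_succ_iff.1 hk)

variable [TopologicalSpace X]

theorem exists_forall_iterate_mem (hf : Continuous f) {I : ℕ → Set X}
    (hcompact : IsCompact (I 0)) (hclosed : ∀ n, IsClosed (I n)) (hne : ∀ n, (I n).Nonempty)
    (hI : ∀ n, I (n + 1) ⊆ f '' I n) : ∃ x, ∀ n, f^[n] x ∈ I n := by
  let T : ℕ → Set X := fun n => ⋂ k ≤ n, f^[k] ⁻¹' I k
  have mem_T {n x} : x ∈ T n ↔ ∀ k ≤ n, f^[k] x ∈ I k := by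
    simp only [T, mem_iInter, mem_preimage]
  have T_closed n : IsClosed (T n) :=
    isClosed_biInter fun k _ => (hclosed k).preimage (hf.iterate k)
  have T_compact : IsCompact (T 0) :=
    hcompact.of_isClosed_subset (T_closed 0) fun x hx => mem_T.1 hx 0 le_rfl
  have T_nonempty n : (T n).Nonempty :=
    (exists_forall_le_iterate_mem hne hI n).imp fun x hx => mem_T.2 hx
  have T_anti n : T (n + 1) ⊆ T n :=
    fun x hx => mem_T.2 fun k hk => mem_T.1 hx k (hk.trans n.le_succ)
  obtain ⟨x, hx⟩ := IsCompact.nonempty_iInter_of_sequence_nonempty_isCompact_isClosed T T_anti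
    T_nonempty T_compact T_closed
  exact ⟨x, fun n => mem_T.1 (mem_iInter.1 hx n) n le_rfl⟩

theorem exists_mem_nhds_forall_iterate_mem [T2Space X] (hf : Continuous f) {p : X}
    {A : ℕ → Set X}
    (hA : ∀ n, ∀ U ∈ 𝓝 p, ∃ K ⊆ U ∩ A n, IsCompact K ∧ f '' K ∈ 𝓝 p)
    {U : Set X} (hU : U ∈ 𝓝 p) : ∃ x ∈ U, ∀ n, f^[n] x ∈ A n := by
  choose! K K_subset K_compact image_K_mem using hA
  let V : ℕ → Set X := fun n => Nat.rec U (fun k W => f '' K k W) n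
  have V_mem n : V n ∈ 𝓝 p := by
    induction n with
    | zero => exact hU
    | succ n ih => exact image_K_mem n _ ih
  have compact n : IsCompact (K n (V n)) := K_compact n _ (V_mem n)
  have subset n : K n (V n) ⊆ V n ∩ A n := K_subset n _ (V_mem n)
  obtain ⟨x, hx⟩ := exists_forall_iterate_mem hf (I := fun n => K n (V n)) (compact 0)
    (fun n => (compact n).isClosed)
    (fun n => (nonempty_of_mem (mem_of_mem_nhds (V_mem (n + 1)))).of_image)
    (fun n => (subset (n + 1)).trans inter_subset_left)
  exact ⟨x, (subset 0 (hx 0)).1, fun n => (subset n (hx n)).2⟩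

end Itinerary

theorem uIcc_mem_nhds_zero_of_mul_neg {a b : ℝ} (h : a * b < 0) : uIcc a b ∈ 𝓝 0 := by
  rcases mul_neg_iff.1 h with ⟨ha, hb⟩ | ⟨ha, hb⟩
  · exact uIcc_comm a b ▸ mem_of_superset (Icc_mem_nhds hb ha) Icc_subset_uIcc
  · exact mem_of_superset (Icc_mem_nhds ha hb) Icc_subset_uIcc

/-- The map `x ↦ r x sin (1 / x)` extended by `0` at `0`; the extension is automatic because
`1 / 0 = 0` in Lean. -/
noncomputable def mulSinInv (r x : ℝ) : ℝ := r * x * Real.sin (1 / x)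

namespace mulSinInv

variable {r : ℝ}

theorem neg_right (r x : ℝ) : mulSinInv r (-x) = mulSinInv r x := by
  simp only [mulSinInv, div_neg, Real.sin_neg, mul_neg, neg_mul, neg_neg]

theorem apply_inv (r θ : ℝ) : mulSinInv r θ⁻¹ = r * θ⁻¹ * Real.sin θ := by
  rw [mulSinInv, one_div, inv_inv]

theorem abs_apply_le (r x : ℝ) : |mulSinInv r x| ≤ |r * x| := by
  rw [mulSinInv, abs_mul]
  exact mul_le_of_le_one_right (abs_nonneg _) (Real.abs_sin_le_one _)

theorem continuous (r : ℝ) : Continuous (mulSinInv r) := by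
  refine continuous_iff_continuousAt.2 fun x => ?_
  rcases eq_or_ne x 0 with rfl | hx
  · have hbound : Tendsto (fun x => |r * x|) (𝓝 0) (𝓝 0) :=
      (by fun_prop : Continuous fun x => |r * x|).tendsto' 0 0 (by simp)
    have hzero : mulSinInv r 0 = 0 := by simp [mulSinInv]
    rw [ContinuousAt, hzero]
    exact squeeze_zero_norm (abs_apply_le r) hbound
  · unfold mulSinInv
    fun_prop (disch := exact hx)

theorem image_uIcc_mem_nhds_zero (hr : r ≠ 0) {θ : ℝ} (hθ : 0 < θ) (hsin : Real.sin θ = 1) :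
    mulSinInv r '' uIcc θ⁻¹ (θ + Real.pi)⁻¹ ∈ 𝓝 0 := by
  refine mem_of_superset (uIcc_mem_nhds_zero_of_mul_neg ?_)
    (intermediate_value_uIcc (continuous r).continuousOn)
  have hpos : 0 < r ^ 2 * (θ⁻¹ * (θ + Real.pi)⁻¹) := by positivity
  rw [apply_inv, apply_inv, Real.sin_add_pi, hsin]
  linarith

theorem exists_isCompact_subset_Ioi (hr : r ≠ 0) {U : Set ℝ} (hU : U ∈ 𝓝 0) :
    ∃ K ⊆ U ∩ Ioi 0, IsCompact K ∧ mulSinInv r '' K ∈ 𝓝 0 := by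
  let θ : ℕ → ℝ := fun k => Real.pi / 2 + k * (2 * Real.pi)
  have θ_pos k : 0 < θ k := by positivity
  have sin_θ k : Real.sin (θ k) = 1 := by
    rw [Real.sin_add_nat_mul_two_pi, Real.sin_pi_div_two]
  have θ_tendsto : Tendsto θ atTop atTop :=
    tendsto_atTop_add_const_left _ _
      (tendsto_natCast_atTop_atTop.atTop_mul_const Real.two_pi_pos)
  have intervals_tendsto :
      Tendsto (fun k => uIcc (θ k)⁻¹ (θ k + Real.pi)⁻¹) atTop (𝓝 0).smallSets :=
    (tendsto_inv_atTop_zero.comp θ_tendsto).uIcc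
      (tendsto_inv_atTop_zero.comp (tendsto_atTop_add_const_right _ _ θ_tendsto))
  obtain ⟨k, hk⟩ := (tendsto_smallSets_iff.1 intervals_tendsto U hU).exists
  have hpos : uIcc (θ k)⁻¹ (θ k + Real.pi)⁻¹ ⊆ Ioi 0 :=
    ordConnected_Ioi.uIcc_subset (inv_pos.2 (θ_pos k))
      (inv_pos.2 (add_pos (θ_pos k) Real.pi_pos))
  exact ⟨_, subset_inter hk hpos, isCompact_uIcc,
    image_uIcc_mem_nhds_zero hr (θ_pos k) (sin_θ k)⟩

theorem exists_isCompact_subset_Iio (hr : r ≠ 0) {U : Set ℝ} (hU : U ∈ 𝓝 0) :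
    ∃ K ⊆ U ∩ Iio 0, IsCompact K ∧ mulSinInv r '' K ∈ 𝓝 0 := by
  have hnegU : Neg.neg ⁻¹' U ∈ 𝓝 (0 : ℝ) := continuous_neg.tendsto' 0 0 neg_zero hU
  obtain ⟨K, hKU, hK, hfK⟩ := exists_isCompact_subset_Ioi hr hnegU
  refine ⟨Neg.neg '' K, ?_, hK.image continuous_neg, ?_⟩
  · rintro _ ⟨x, hx, rfl⟩
    exact ⟨(hKU hx).1, mem_Iio.2 (neg_lt_zero.2 (hKU hx).2)⟩
  · simpa only [image_image, neg_right] using hfK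

end mulSinInv

theorem stmt_11_general {r : ℝ} (hr : r ≠ 0) {f : ℝ → ℝ} (hf0 : f 0 = 0)
    (hfx : ∀ x : ℝ, x ≠ 0 → f x = r * x * Real.sin (1 / x)) (s : ℕ → LR)
    {U : Set ℝ} (hU : U ∈ 𝓝 0) :
    ∃ x ∈ U, ∀ n : ℕ, (s n = LR.L → 0 < f^[n] x) ∧ (s n = LR.R → f^[n] x < 0) := by
  obtain rfl : f = mulSinInv r := by
    ext x
    rcases eq_or_ne x 0 with rfl | hx
    · simp [hf0, mulSinInv]
    · exact hfx x hx
  refine exists_mem_nhds_forall_iterate_mem (mulSinInv.continuous r)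
    (A := fun n => {y | (s n = LR.L → 0 < y) ∧ (s n = LR.R → y < 0)}) (fun n W hW => ?_) hU
  cases s n with
  | L => simpa [Ioi] using mulSinInv.exists_isCompact_subset_Ioi hr hW
  | R => simpa [Iio] using mulSinInv.exists_isCompact_subset_Iio hr hW

/-- For 0 < r < 1 and f(x) = r x sin(1/x), every L-R sequence is realized:
there is a point whose n-th iterate is positive when tagged L and negative
when tagged R. -/
theorem stmt_11 (r : ℝ) (hr0 : 0 < r) (hr1 : r < 1) (f : ℝ → ℝ)
    (hf0 : f 0 = 0) (hfx : ∀ x : ℝ, x ≠ 0 → f x = r * x * Real.sin (1 / x))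
    (s : ℕ → LR) :
    ∃ x ∈ Set.Icc (-1 : ℝ) 1, ∀ n : ℕ,
      (s n = LR.L → 0 < f^[n] x) ∧
      (s n = LR.R → f^[n] x < 0) :=
  stmt_11_general hr0.ne' hf0 hfx s (Icc_mem_nhds (by norm_num) (by norm_num))
end

section
/- Let 0 < r < 1 and define f : [−1, 1] → [−1, 1] by f(x) = r·x·sin(1/x) for x ≠ 0 and f(0) = 0. For every k ≥ 1 and every word w : {0, 1, …, k−1} → {L, R} there exists x ∈ [−1, 1] such that for every n < k: fⁿ(x) > 0 if w(n) = L and fⁿ(x) < 0 if w(n) = R, and moreover f^{k}(x) = 0. -/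
/-!
Since `x * sin (1 / x)` is continuous on each interval `(0, δ)` and takes both signs there, the
intermediate value theorem shows that `f` maps `(0, δ)` onto a neighbourhood of `0`; so does
`(-δ, 0)`, as `f` is even. Hence a point sufficiently close to `0` has preimages of either sign
arbitrarily close to `0`, and a word is realized by choosing preimages backwards from `0`, one
letter at a time.
-/

open Filter Set Topology

section Itinerary

variable {X ι : Type*} {f : X → X} {l : Filter X} {S : ι → Set X}

theorem frequently_itinerary (hS : ∀ i, l ≤ map f (l ⊓ 𝓟 (S i))) {P : X → Prop}
    (hP : ∃ᶠ x in l, P x) {k : ℕ} (w : Fin k → ι) :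
    ∃ᶠ x in l, (∀ n : Fin k, f^[n] x ∈ S (w n)) ∧ P (f^[k] x) := by
  induction k with
  | zero => simpa using hP
  | succ k ih =>
    have hpre := frequently_map.1 ((ih fun n => w n.succ).filter_mono (hS (w 0)))
    refine (frequently_inf_principal.1 hpre).mono ?_
    rintro x ⟨hx, htail, hend⟩
    exact ⟨Fin.cases hx htail, hend⟩

end Itinerary

theorem nhds_le_map_of_frequently_lt_of_frequently_gt {X α ι : Type*} [TopologicalSpace X]
    [LinearOrder α] [TopologicalSpace α] [OrderTopology α] {l : Filter X} {p : ι → Prop}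
    {s : ι → Set X} (hl : l.HasBasis p s) (hs : ∀ i, p i → IsPreconnected (s i))
    {f : X → α} (hf : ∀ i, p i → ContinuousOn f (s i)) {c : α}
    (hlt : ∃ᶠ x in l, f x < c) (hgt : ∃ᶠ x in l, c < f x) : 𝓝 c ≤ map f l := by
  refine (hl.map f).ge_iff.2 fun i hi => ?_
  obtain ⟨a, hac, ha⟩ := (hlt.and_eventually (hl.mem_of_mem hi)).exists
  obtain ⟨b, hcb, hb⟩ := (hgt.and_eventually (hl.mem_of_mem hi)).exists
  exact mem_of_superset (Icc_mem_nhds hac hcb) ((hs i hi).intermediate_value ha hb (hf i hi))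

theorem frequently_atTop_of_periodic {α β : Type*} [AddCommGroup α] [LinearOrder α]
    [IsOrderedAddMonoid α] [Archimedean α] {g : α → β} {c : α} (hg : Function.Periodic g c)
    (hc : 0 < c) {P : β → Prop} {t : α} (ht : P (g t)) : ∃ᶠ x in atTop, P (g x) := by
  refine frequently_atTop.2 fun a => ?_
  obtain ⟨y, hy, hty⟩ := hg.exists_mem_Ico hc t a
  exact ⟨y, hy.1, hty ▸ ht⟩

theorem map_nhdsLT_zero_of_even {α β : Type*} [AddCommGroup α] [PartialOrder α]
    [IsOrderedAddMonoid α] [TopologicalSpace α] [ContinuousNeg α] {g : α → β}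
    (hg : Function.Even g) : map g (𝓝[<] 0) = map g (𝓝[>] 0) := by
  have hneg : map Neg.neg (𝓝[>] (0 : α)) = 𝓝[<] 0 := by simp
  rw [← hneg, map_map]
  exact congrArg (map · (𝓝[>] 0)) (funext hg)

section SinInv

theorem frequently_sin_one_div_nhdsGT_zero {P : ℝ → Prop} {t : ℝ} (ht : P (Real.sin t)) :
    ∃ᶠ x in 𝓝[>] (0 : ℝ), P (Real.sin (1 / x)) := by
  rw [← inv_atTop₀, ← Filter.map_inv, frequently_map]
  simpa using frequently_atTop_of_periodic Real.sin_periodic Real.two_pi_pos ht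

theorem nhds_zero_le_map_mul_sin_one_div_nhdsGT :
    𝓝 0 ≤ map (fun x : ℝ => x * Real.sin (1 / x)) (𝓝[>] 0) := by
  have hpos : ∃ᶠ x in 𝓝[>] (0 : ℝ), 0 < Real.sin (1 / x) :=
    frequently_sin_one_div_nhdsGT_zero (P := (0 < ·)) (t := Real.pi / 2) (by simp)
  have hneg : ∃ᶠ x in 𝓝[>] (0 : ℝ), Real.sin (1 / x) < 0 :=
    frequently_sin_one_div_nhdsGT_zero (P := (· < 0)) (t := -(Real.pi / 2)) (by simp)
  refine nhds_le_map_of_frequently_lt_of_frequently_gt (nhdsGT_basis 0)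
    (fun _ _ => isPreconnected_Ioo) (fun δ _ => ?_)
    ((hneg.and_eventually self_mem_nhdsWithin).mono fun _ hx => mul_neg_of_pos_of_neg hx.2 hx.1)
    ((hpos.and_eventually self_mem_nhdsWithin).mono fun _ hx => mul_pos hx.2 hx.1)
  have hne : ∀ x ∈ Ioo 0 δ, x ≠ 0 := fun _ hx => hx.1.ne'
  fun_prop (disch := assumption)

variable {r : ℝ}

theorem nhds_zero_le_map_const_mul_mul_sin_one_div_nhdsGT (hr : r ≠ 0) :
    𝓝 0 ≤ map (fun x : ℝ => r * x * Real.sin (1 / x)) (𝓝[>] 0) := by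
  simpa [Function.comp_def, map_mul_left_nhds₀ hr, mul_assoc] using
    map_mono (m := (r * ·)) nhds_zero_le_map_mul_sin_one_div_nhdsGT

theorem even_const_mul_mul_sin_one_div :
    Function.Even fun x : ℝ => r * x * Real.sin (1 / x) := fun x => by
  simp [div_neg]

theorem nhds_zero_le_map_const_mul_mul_sin_one_div_nhdsLT (hr : r ≠ 0) :
    𝓝 0 ≤ map (fun x : ℝ => r * x * Real.sin (1 / x)) (𝓝[<] 0) := by
  rw [map_nhdsLT_zero_of_even even_const_mul_mul_sin_one_div]
  exact nhds_zero_le_map_const_mul_mul_sin_one_div_nhdsGT hr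

end SinInv

/-- The open half-line named by a letter of an itinerary: `L` stands for the positive reals and `R`
for the negative ones. -/
def LR.halfLine : LR → Set ℝ
  | L => Ioi 0
  | R => Iio 0

theorem LR.mem_halfLine_iff {a : LR} {x : ℝ} :
    x ∈ a.halfLine ↔ (a = L → 0 < x) ∧ (a = R → x < 0) := by
  cases a <;> simp [halfLine]

theorem stmt_12_general {r : ℝ} (hr : r ≠ 0) {f : ℝ → ℝ} (hf0 : f 0 = 0)
    (hfx : ∀ x : ℝ, x ≠ 0 → f x = r * x * Real.sin (1 / x)) {k : ℕ} (w : Fin k → LR) :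
    ∃ᶠ x in 𝓝 (0 : ℝ),
      (∀ n : Fin k,
        (w n = LR.L → 0 < f^[(n : ℕ)] x) ∧
        (w n = LR.R → f^[(n : ℕ)] x < 0)) ∧
      f^[k] x = 0 := by
  obtain rfl : f = fun x => r * x * Real.sin (1 / x) := by
    funext x
    rcases eq_or_ne x 0 with rfl | hx
    · simp [hf0]
    · exact hfx x hx
  simp only [← LR.mem_halfLine_iff]
  have hmap : ∀ a : LR, 𝓝 0 ≤ map (fun x => r * x * Real.sin (1 / x)) (𝓝[a.halfLine] 0)
    | LR.L => nhds_zero_le_map_const_mul_mul_sin_one_div_nhdsGT hr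
    | LR.R => nhds_zero_le_map_const_mul_mul_sin_one_div_nhdsLT hr
  have hzero : ∃ᶠ x in 𝓝 (0 : ℝ), x = 0 :=
    Frequently.filter_mono (frequently_pure.2 rfl) (pure_le_nhds (0 : ℝ))
  exact frequently_itinerary hmap hzero w

/-- For 0 < r < 1 and f(x) = r x sin(1/x), every finite L-R word is realized by a
point whose orbit reaches 0 right after following the word. -/
theorem stmt_12 (r : ℝ) (hr0 : 0 < r) (hr1 : r < 1) (f : ℝ → ℝ)
    (hf0 : f 0 = 0) (hfx : ∀ x : ℝ, x ≠ 0 → f x = r * x * Real.sin (1 / x))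
    (k : ℕ) (hk : 1 ≤ k) (w : Fin k → LR) :
    ∃ x ∈ Set.Icc (-1 : ℝ) 1,
      (∀ n : Fin k,
        (w n = LR.L → 0 < f^[(n : ℕ)] x) ∧
        (w n = LR.R → f^[(n : ℕ)] x < 0)) ∧
      f^[k] x = 0 :=
  ((stmt_12_general hr0.ne' hf0 hfx w).and_eventually
    (Icc_mem_nhds neg_one_lt_zero one_pos)).exists.imp fun _ h => h.symm
end
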